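/- arXiv:2503.11418 — 10 statements merged into one kernel-verified Lean document; each statement's English description precedes it below -/
import Mathlib

section
/- Let X₁, X₂, X₃ be independent uniformly distributed random points on [0,1], and let ρ_T(x,y) = min(|x−y|, 1−|x−y|) be the distance on the one-dimensional unit torus. Fix 0 < r₀ < 1/3. Then: (i) the probability that all three pairwise distances ρ_T(Xᵢ,Xⱼ) are less than r₀ equals 3r₀²; (ii) the probability that ρ_T(X₁,X₂) < r₀ and ρ_T(X₁,X₃) < r₀ but ρ_T(X₂,X₃) > r₀ equals r₀²; (iii) the probability that ρ_T(X₁,X₂) < r₀ but ρ_T(X₁,X₃) > r₀ and ρ_T(X₂,X₃) > r₀ equals 2r₀ − 5r₀²; (iv) the probability that all three pairwise distances exceed r₀ equals (1−3r₀)². -/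
open MeasureTheory

/-- The distance on the one-dimensional unit torus. -/
noncomputable def rhoT (x y : ℝ) : ℝ := min |x - y| (1 - |x - y|)

/-- The unit cube `[0,1]³` as a subset of `ℝ × ℝ × ℝ`:
the law of three i.i.d. uniform points on `[0,1]` is Lebesgue measure on this cube. -/
def unitCube3 : Set (ℝ × ℝ × ℝ) :=
  Set.Icc (0:ℝ) 1 ×ˢ Set.Icc (0:ℝ) 1 ×ˢ Set.Icc (0:ℝ) 1

theorem norm_coe_aux (x : ℝ) (hx : |x| ≤ 1) : ‖(x : UnitAddCircle)‖ = min |x| (1 - |x|) := by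
  rw [UnitAddCircle.norm_eq, abs_sub_round_eq_min]
  obtain ⟨h1, h2⟩ := abs_le.1 hx
  rcases lt_or_ge x 0 with h | h
  · have : Int.fract x = x + 1 := by
      rw [Int.fract_eq_iff]
      refine ⟨by linarith, by linarith, -1, by push_cast; ring⟩
    rw [this, abs_of_neg h, min_comm]
    congr 1 <;> ring
  · rcases h2.lt_or_eq with h3 | rfl
    · rw [Int.fract_eq_self.2 ⟨h, h3⟩, abs_of_nonneg h]
    · simp

theorem ie_aux {Ω : Type*} [MeasurableSpace Ω] (V : Measure Ω) [IsProbabilityMeasure V]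
    (A B C : Set Ω) (hA : MeasurableSet A) (hB : MeasurableSet B) (hC : MeasurableSet C)
    (a b c : ℝ) (a1 : V.real A = a) (a2 : V.real B = a) (a3 : V.real C = a)
    (b1 : V.real (A ∩ B) = b) (b2 : V.real (A ∩ C) = b) (b3 : V.real (B ∩ C) = b)
    (h : V.real (A ∩ B ∩ C) = c) :
    V.real (A ∩ B ∩ Cᶜ) = b - c ∧ V.real (A ∩ Bᶜ ∩ Cᶜ) = a - 2 * b + c ∧
      V.real (Aᶜ ∩ Bᶜ ∩ Cᶜ) = 1 - 3 * a + 3 * b - c := by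
  have e : ∀ X Y : Set Ω, MeasurableSet Y → V.real (X ∩ Y) + V.real (X ∩ Yᶜ) = V.real X := by
    intro X Y hY
    exact measureReal_inter_add_sdiff hY
  have h1 := e (A ∩ B) C hC
  have h2 := e (A ∩ Bᶜ) C hC
  have h3 := e (Aᶜ ∩ Bᶜ) C hC
  have h4 := e A B hB
  have h5 := e Aᶜ B hB
  have h6 := e Set.univ A hA
  have h7 := e (A ∩ C) B hB
  have h8 := e B A hA
  have h9 := e C A hA
  have h10 := e (C ∩ Aᶜ) B hB
  have h11 := e (B ∩ C) A hA
  simp only [Set.univ_inter, probReal_univ] at h6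
  have q1 : A ∩ C ∩ B = A ∩ B ∩ C := by ext; simp; tauto
  have q2 : A ∩ C ∩ Bᶜ = A ∩ Bᶜ ∩ C := by ext; simp; tauto
  have q3 : B ∩ A = A ∩ B := Set.inter_comm _ _
  have q4 : C ∩ A = A ∩ C := Set.inter_comm _ _
  have q5 : C ∩ Aᶜ ∩ Bᶜ = Aᶜ ∩ Bᶜ ∩ C := by ext; simp; tauto
  have q6 : C ∩ Aᶜ ∩ B = B ∩ C ∩ Aᶜ := by ext; simp; tauto
  have q7 : B ∩ C ∩ A = A ∩ B ∩ C := by ext; simp; tauto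
  have q8 : Aᶜ ∩ B = B ∩ Aᶜ := Set.inter_comm _ _
  rw [q1, q2] at h7
  rw [q3] at h8
  rw [q4] at h9
  rw [q5, q6] at h10
  rw [q7] at h11
  rw [q8] at h5
  refine ⟨by linarith, by linarith, by linarith⟩

instance instProbUnitAddCircle : IsProbabilityMeasure (volume : Measure UnitAddCircle) := ⟨by simp⟩

theorem mp_aux : MeasurePreserving
    (fun p : ℝ × ℝ × ℝ => ((p.2.1 : UnitAddCircle) - (p.1 : UnitAddCircle), (p.2.2 : UnitAddCircle) - (p.1 : UnitAddCircle)))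
    (volume.restrict unitCube3) (volume : Measure (UnitAddCircle × UnitAddCircle)) := by
  have h1 : MeasurePreserving ((↑) : ℝ → UnitAddCircle) (volume.restrict (Set.Icc 0 1)) volume := by
    have := UnitAddCircle.measurePreserving_mk 0
    rwa [zero_add, restrict_Ioc_eq_restrict_Icc] at this
  have h3 := h1.prod (h1.prod h1)
  rw [Measure.prod_restrict, Measure.prod_restrict] at h3
  have h4 : MeasurePreserving (fun p : UnitAddCircle × UnitAddCircle × UnitAddCircle => (p.1, p.2 - (p.1, p.1)))
      (volume.prod volume) (volume.prod volume) := by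
    refine MeasurePreserving.skew_product (f := id) (g := fun a (q : UnitAddCircle × UnitAddCircle) => q - (a, a))
      (MeasurePreserving.id _) ?_ ?_
    · fun_prop
    · filter_upwards with a
      have h5 : MeasurePreserving (Prod.map (fun x : UnitAddCircle => x - a) (fun x : UnitAddCircle => x - a))
        (volume.prod volume) (volume.prod volume) :=
        (measurePreserving_sub_right _ _).prod (measurePreserving_sub_right _ _)
      exact h5.map_eq
  exact (measurePreserving_snd.comp h4).comp h3

theorem vol_ball_aux (r : ℝ) (h13 : r < 1/3) :
    volume {u : UnitAddCircle | ‖u‖ < r} = ENNReal.ofReal (2 * r) := by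
  have : {u : UnitAddCircle | ‖u‖ < r} = Metric.ball 0 r := by ext; simp
  rw [this, ← measure_congr AddCircle.closedBall_ae_eq_ball, AddCircle.volume_closedBall,
    min_eq_right (by linarith)]

theorem null_aux (r : ℝ) : ∀ᵐ u : UnitAddCircle, ‖u‖ ≠ r := by
  have := AddCircle.closedBall_ae_eq_ball (T := 1) (x := 0) (ε := r)
  filter_upwards [this.mem_iff] with u hu
  simp only [Metric.mem_closedBall, Metric.mem_ball, dist_zero_right] at hu
  intro h
  rw [h] at hu
  simp at hu

theorem integral_aux (r : ℝ) (h0 : 0 < r) :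
    ∫ y in Set.Ioo (-r) r, (2 * r - |y|) = 3 * r ^ 2 := by
  rw [← integral_Ioc_eq_integral_Ioo, ← intervalIntegral.integral_of_le (by linarith)]
  have hi : ∀ a b : ℝ, IntervalIntegrable (fun y => 2 * r - |y|) volume a b :=
    fun a b => (by fun_prop : Continuous fun y : ℝ => 2 * r - |y|).intervalIntegrable a b
  rw [← intervalIntegral.integral_add_adjacent_intervals (hi (-r) 0) (hi 0 r)]
  have e1 : ∫ y in (-r)..0, (2 * r - |y|) = ∫ y in (-r)..0, (2 * r + y) := by
    apply intervalIntegral.integral_congr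
    intro y hy
    rw [Set.uIcc_of_le (by linarith)] at hy
    simp only [abs_of_nonpos hy.2]; ring
  have e2 : ∫ y in 0..r, (2 * r - |y|) = ∫ y in 0..r, (2 * r - y) := by
    apply intervalIntegral.integral_congr
    intro y hy
    rw [Set.uIcc_of_le (by linarith)] at hy
    simp only [abs_of_nonneg hy.1]
  rw [e1, e2, intervalIntegral.integral_add (by simp) (by simp),
    intervalIntegral.integral_sub (by simp) (by simp)]
  simp
  ring

theorem triple_aux (r : ℝ) (h0 : 0 < r) (h13 : r < 1/3) :
    volume {p : UnitAddCircle × UnitAddCircle | ‖p.1‖ < r ∧ ‖p.2‖ < r ∧ ‖p.2 - p.1‖ < r}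
      = ENNReal.ofReal (3 * r ^ 2) := by
  have h1 : MeasurePreserving ((↑) : ℝ → UnitAddCircle) (volume.restrict (Set.Ioc (-(1/2)) (1/2))) volume := by
    have := UnitAddCircle.measurePreserving_mk (-(1/2))
    rwa [show (-(1/2) + 1 : ℝ) = 1/2 by norm_num] at this
  have h2 := h1.prod h1
  rw [Measure.prod_restrict] at h2
  have hm : MeasurableSet {p : UnitAddCircle × UnitAddCircle | ‖p.1‖ < r ∧ ‖p.2‖ < r ∧ ‖p.2 - p.1‖ < r} := by
    measurability
  have h3 := h2.measure_preimage hm.nullMeasurableSet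
  rw [Measure.restrict_apply (h2.measurable hm)] at h3
  refine h3.symm.trans ?_
  have hset : (Prod.map ((↑) : ℝ → UnitAddCircle) ((↑) : ℝ → UnitAddCircle) ⁻¹'
      {p : UnitAddCircle × UnitAddCircle | ‖p.1‖ < r ∧ ‖p.2‖ < r ∧ ‖p.2 - p.1‖ < r}) ∩
      Set.Ioc (-(1/2)) (1/2) ×ˢ Set.Ioc (-(1/2)) (1/2)
      = regionBetween (fun y => max (-r) (y - r)) (fun y => min r (y + r)) (Set.Ioo (-r) r) := by
    ext ⟨y, z⟩
    have hn : ∀ x : ℝ, |x| ≤ 1/2 → ‖(x : UnitAddCircle)‖ = |x| := by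
      intro x hx
      rw [norm_coe_aux x (by linarith), min_eq_left (by linarith)]
    have key : |y| < r → |z| < r → (‖(z : UnitAddCircle) - (y : UnitAddCircle)‖ < r ↔ |z - y| < r) := by
      intro hy hz
      have := abs_sub z y
      have h5 : |z - y| ≤ |z| + |y| := abs_sub _ _
      rw [← AddCircle.coe_sub, norm_coe_aux _ (by linarith), min_lt_iff]
      constructor
      · rintro (h | h)
        · exact h
        · linarith
      · exact Or.inl
    simp only [Set.mem_inter_iff, Set.mem_preimage, Prod.map, Set.mem_ofPred_eq, Set.mem_prod,
      Set.mem_Ioc, regionBetween, Set.mem_Ioo, max_lt_iff, lt_min_iff]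
    constructor
    · rintro ⟨⟨a, b, c⟩, ⟨d1, d2⟩, e1, e2⟩
      rw [hn y (abs_le.2 ⟨by linarith, by linarith⟩)] at a
      rw [hn z (abs_le.2 ⟨by linarith, by linarith⟩)] at b
      rw [key a b] at c
      rw [abs_lt] at a b c
      refine ⟨⟨?_, ?_⟩, ⟨?_, ?_⟩, ?_, ?_⟩ <;> linarith
    · rintro ⟨⟨a1, a2⟩, ⟨b1, b2⟩, c1, c2⟩
      have a : |y| < r := abs_lt.2 ⟨a1, a2⟩
      have b : |z| < r := abs_lt.2 ⟨b1, c1⟩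
      rw [hn y (by linarith), hn z (by linarith), key a b]
      exact ⟨⟨a, b, abs_lt.2 ⟨by linarith, by linarith⟩⟩, ⟨by linarith, by linarith⟩,
        by linarith, by linarith⟩
  rw [hset]
  have hc1 : Continuous fun y : ℝ => max (-r) (y - r) := by fun_prop
  have hc2 : Continuous fun y : ℝ => min r (y + r) := by fun_prop
  rw [volume_regionBetween_eq_integral
    (hc1.integrableOn_Icc.mono_set Set.Ioo_subset_Icc_self)
    (hc2.integrableOn_Icc.mono_set Set.Ioo_subset_Icc_self) measurableSet_Ioo]
  · rw [← integral_aux r h0]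
    congr 1
    apply setIntegral_congr_fun measurableSet_Ioo
    intro y hy
    simp only [Pi.sub_apply]
    rcases le_total 0 y with h | h
    · rw [abs_of_nonneg h, min_eq_left (by linarith), max_eq_right (by linarith)]; ring
    · rw [abs_of_nonpos h, min_eq_right (by linarith), max_eq_left (by linarith)]; ring
  · intro y hy
    have := hy.1
    have := hy.2
    refine max_le (le_min ?_ ?_) (le_min ?_ ?_) <;> linarith

theorem torus_aux (r : ℝ) (h0 : 0 < r) (h13 : r < 1/3) :
    (volume {p : UnitAddCircle × UnitAddCircle | ‖p.1‖ < r ∧ ‖p.2‖ < r ∧ ‖p.2 - p.1‖ > r} = ENNReal.ofReal (r ^ 2)) ∧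
    (volume {p : UnitAddCircle × UnitAddCircle | ‖p.1‖ < r ∧ ‖p.2‖ > r ∧ ‖p.2 - p.1‖ > r}
      = ENNReal.ofReal (2 * r - 5 * r ^ 2)) ∧
    (volume {p : UnitAddCircle × UnitAddCircle | ‖p.1‖ > r ∧ ‖p.2‖ > r ∧ ‖p.2 - p.1‖ > r}
      = ENNReal.ofReal ((1 - 3 * r) ^ 2)) := by
  set D : Set UnitAddCircle := {u : UnitAddCircle | ‖u‖ < r} with hD
  have hDm : MeasurableSet D := by measurability
  have hDv := vol_ball_aux r h13
  let V : Measure (UnitAddCircle × UnitAddCircle) := volume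
  let A : Set (UnitAddCircle × UnitAddCircle) := Prod.fst ⁻¹' D
  let B : Set (UnitAddCircle × UnitAddCircle) := Prod.snd ⁻¹' D
  let C : Set (UnitAddCircle × UnitAddCircle) := (fun p => p.2 - p.1) ⁻¹' D
  have m1 : MeasurePreserving (Prod.fst : UnitAddCircle × UnitAddCircle → UnitAddCircle) volume volume := measurePreserving_fst
  have m2 : MeasurePreserving (Prod.snd : UnitAddCircle × UnitAddCircle → UnitAddCircle) volume volume := measurePreserving_snd
  have s1 : MeasurePreserving (fun p : UnitAddCircle × UnitAddCircle => (p.1, p.2 - p.1)) volume volume :=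
    measurePreserving_prod_sub volume volume
  have s2 : MeasurePreserving (fun p : UnitAddCircle × UnitAddCircle => (p.2, p.1 - p.2)) volume volume :=
    measurePreserving_prod_sub_swap volume volume
  have m3 : MeasurePreserving (fun p : UnitAddCircle × UnitAddCircle => p.2 - p.1) volume volume := m2.comp s1
  have hA : MeasurableSet A := m1.measurable hDm
  have hB : MeasurableSet B := m2.measurable hDm
  have hC : MeasurableSet C := m3.measurable hDm
  have r0 : ∀ x : ℝ, 0 ≤ x → (ENNReal.ofReal x).toReal = x := fun x hx => ENNReal.toReal_ofReal hx
  have a1 : V.real A = 2 * r := by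
    rw [Measure.real, m1.measure_preimage hDm.nullMeasurableSet, hDv, r0 _ (by linarith)]
  have a2 : V.real B = 2 * r := by
    rw [Measure.real, m2.measure_preimage hDm.nullMeasurableSet, hDv, r0 _ (by linarith)]
  have a3 : V.real C = 2 * r := by
    rw [Measure.real, m3.measure_preimage hDm.nullMeasurableSet, hDv, r0 _ (by linarith)]
  have hDD : volume (D ×ˢ D) = ENNReal.ofReal (2 * r * (2 * r)) := by
    rw [Measure.volume_eq_prod, Measure.prod_prod, hDv, ← ENNReal.ofReal_mul (by linarith)]
  have hDDm : MeasurableSet (D ×ˢ D) := hDm.prod hDm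
  have b1 : V.real (A ∩ B) = 2 * r * (2 * r) := by
    rw [Measure.real, show A ∩ B = D ×ˢ D from rfl, hDD, r0 _ (by positivity)]
  have b2 : V.real (A ∩ C) = 2 * r * (2 * r) := by
    rw [Measure.real, show A ∩ C = (fun p : UnitAddCircle × UnitAddCircle => (p.1, p.2 - p.1)) ⁻¹' (D ×ˢ D) from rfl,
      s1.measure_preimage hDDm.nullMeasurableSet, hDD, r0 _ (by positivity)]
  have b3 : V.real (B ∩ C) = 2 * r * (2 * r) := by
    have : B ∩ C = (fun p : UnitAddCircle × UnitAddCircle => (p.2, p.1 - p.2)) ⁻¹' (D ×ˢ D) := by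
      ext p
      simp [B, C, D, norm_sub_rev p.2 p.1]
    rw [Measure.real, this,
      s2.measure_preimage hDDm.nullMeasurableSet, hDD, r0 _ (by positivity)]
  have c1 : V.real (A ∩ B ∩ C) = 3 * r ^ 2 := by
    have : A ∩ B ∩ C = {p : UnitAddCircle × UnitAddCircle | ‖p.1‖ < r ∧ ‖p.2‖ < r ∧ ‖p.2 - p.1‖ < r} := by
      ext p; simp [A, B, C, D, and_assoc]
    rw [Measure.real, this, triple_aux r h0 h13, r0 _ (by positivity)]
  obtain ⟨f1, f2, f3⟩ := ie_aux V A B C hA hB hC _ _ _ a1 a2 a3 b1 b2 b3 c1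
  have n1 : ∀ᵐ p : UnitAddCircle × UnitAddCircle, ‖p.1‖ ≠ r := m1.quasiMeasurePreserving.ae (null_aux r)
  have n2 : ∀ᵐ p : UnitAddCircle × UnitAddCircle, ‖p.2‖ ≠ r := m2.quasiMeasurePreserving.ae (null_aux r)
  have n3 : ∀ᵐ p : UnitAddCircle × UnitAddCircle, ‖p.2 - p.1‖ ≠ r := m3.quasiMeasurePreserving.ae (null_aux r)
  have fin : ∀ (S S' : Set (UnitAddCircle × UnitAddCircle)) (x y : ℝ), V.real S = x → x = y →
      (∀ p : UnitAddCircle × UnitAddCircle, ‖p.1‖ ≠ r → ‖p.2‖ ≠ r → ‖p.2 - p.1‖ ≠ r → (p ∈ S' ↔ p ∈ S)) →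
      volume S' = ENNReal.ofReal y := by
    intro S S' x y hx hxy hS
    have : S' =ᵐ[volume] S := by
      rw [Filter.eventuallyEq_set]
      filter_upwards [n1, n2, n3] with p k1 k2 k3 using hS p k1 k2 k3
    rw [measure_congr this, ← hxy, ← hx, ofReal_measureReal]
  have g : ∀ x : ℝ, x ≠ r → (x > r ↔ ¬ x < r) := fun x hx =>
    ⟨fun h => by linarith, fun h => lt_of_le_of_ne (not_lt.1 h) hx.symm⟩
  refine ⟨fin _ _ _ _ f1 (by ring) ?_, fin _ _ _ _ f2 (by ring) ?_, fin _ _ _ _ f3 (by ring) ?_⟩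
  · intro p k1 k2 k3
    simp only [Set.mem_ofPred_eq, g _ k1, g _ k2, g _ k3, A, B, C, D, Set.mem_inter_iff,
      Set.mem_compl_iff, Set.mem_preimage, and_assoc]
  · intro p k1 k2 k3
    simp only [Set.mem_ofPred_eq, g _ k1, g _ k2, g _ k3, A, B, C, D, Set.mem_inter_iff,
      Set.mem_compl_iff, Set.mem_preimage, and_assoc]
  · intro p k1 k2 k3
    simp only [Set.mem_ofPred_eq, g _ k1, g _ k2, g _ k3, A, B, C, D, Set.mem_inter_iff,
      Set.mem_compl_iff, Set.mem_preimage, and_assoc]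

theorem transfer_aux (S : Set (ℝ × ℝ × ℝ)) (P : Set (UnitAddCircle × UnitAddCircle)) (hP : MeasurableSet P)
    (h : ∀ p ∈ unitCube3, (p ∈ S ↔ ((p.2.1 : UnitAddCircle) - (p.1 : UnitAddCircle), (p.2.2 : UnitAddCircle) - (p.1 : UnitAddCircle)) ∈ P))
    : volume {p | p ∈ unitCube3 ∧ p ∈ S} = volume P := by
  rw [← mp_aux.measure_preimage hP.nullMeasurableSet,
    Measure.restrict_apply (mp_aux.measurable hP)]
  congr 1
  ext p
  simp only [Set.mem_ofPred_eq, Set.mem_inter_iff, Set.mem_preimage]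
  constructor
  · rintro ⟨a, b⟩
    exact ⟨(h p a).1 b, a⟩
  · rintro ⟨a, b⟩
    exact ⟨b, (h p b).2 a⟩

theorem rho_aux (x y : ℝ) (hx : x ∈ Set.Icc (0:ℝ) 1) (hy : y ∈ Set.Icc (0:ℝ) 1) :
    rhoT x y = ‖(y : UnitAddCircle) - (x : UnitAddCircle)‖ := by
  obtain ⟨hx1, hx2⟩ := hx
  obtain ⟨hy1, hy2⟩ := hy
  rw [← AddCircle.coe_sub, norm_coe_aux _ (abs_le.2 ⟨by linarith, by linarith⟩), rhoT,
    abs_sub_comm]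

theorem rho_cube_aux (p : ℝ × ℝ × ℝ) (hp : p ∈ unitCube3) :
    rhoT p.1 p.2.1 = ‖(p.2.1 : UnitAddCircle) - (p.1 : UnitAddCircle)‖ ∧
    rhoT p.1 p.2.2 = ‖(p.2.2 : UnitAddCircle) - (p.1 : UnitAddCircle)‖ ∧
    rhoT p.2.1 p.2.2 = ‖((p.2.2 : UnitAddCircle) - (p.1 : UnitAddCircle)) - ((p.2.1 : UnitAddCircle) - (p.1 : UnitAddCircle))‖ := by
  obtain ⟨h1, h2, h3⟩ := hp
  refine ⟨rho_aux _ _ h1 h2, rho_aux _ _ h1 h3, ?_⟩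
  rw [rho_aux _ _ h2 h3, sub_sub_sub_cancel_right]

theorem stmt_0 (r₀ : ℝ) (h0 : 0 < r₀) (h13 : r₀ < 1/3) :
    (volume {p : ℝ × ℝ × ℝ | p ∈ unitCube3 ∧
        rhoT p.1 p.2.1 < r₀ ∧ rhoT p.1 p.2.2 < r₀ ∧ rhoT p.2.1 p.2.2 < r₀}
      = ENNReal.ofReal (3 * r₀ ^ 2)) ∧
    (volume {p : ℝ × ℝ × ℝ | p ∈ unitCube3 ∧
        rhoT p.1 p.2.1 < r₀ ∧ rhoT p.1 p.2.2 < r₀ ∧ rhoT p.2.1 p.2.2 > r₀}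
      = ENNReal.ofReal (r₀ ^ 2)) ∧
    (volume {p : ℝ × ℝ × ℝ | p ∈ unitCube3 ∧
        rhoT p.1 p.2.1 < r₀ ∧ rhoT p.1 p.2.2 > r₀ ∧ rhoT p.2.1 p.2.2 > r₀}
      = ENNReal.ofReal (2 * r₀ - 5 * r₀ ^ 2)) ∧
    (volume {p : ℝ × ℝ × ℝ | p ∈ unitCube3 ∧
        rhoT p.1 p.2.1 > r₀ ∧ rhoT p.1 p.2.2 > r₀ ∧ rhoT p.2.1 p.2.2 > r₀}
      = ENNReal.ofReal ((1 - 3 * r₀) ^ 2)) := by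
  obtain ⟨t2, t3, t4⟩ := torus_aux r₀ h0 h13
  refine ⟨?_, ?_, ?_, ?_⟩
  · rw [← triple_aux r₀ h0 h13]
    refine transfer_aux {p | rhoT p.1 p.2.1 < r₀ ∧ rhoT p.1 p.2.2 < r₀ ∧ rhoT p.2.1 p.2.2 < r₀} _
      (by measurability) fun p hp => ?_
    obtain ⟨e1, e2, e3⟩ := rho_cube_aux p hp
    simp only [Set.mem_ofPred_eq, e1, e2, e3]
  · rw [← t2]
    refine transfer_aux {p | rhoT p.1 p.2.1 < r₀ ∧ rhoT p.1 p.2.2 < r₀ ∧ rhoT p.2.1 p.2.2 > r₀} _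
      (by measurability) fun p hp => ?_
    obtain ⟨e1, e2, e3⟩ := rho_cube_aux p hp
    simp only [Set.mem_ofPred_eq, e1, e2, e3]
  · rw [← t3]
    refine transfer_aux {p | rhoT p.1 p.2.1 < r₀ ∧ rhoT p.1 p.2.2 > r₀ ∧ rhoT p.2.1 p.2.2 > r₀} _
      (by measurability) fun p hp => ?_
    obtain ⟨e1, e2, e3⟩ := rho_cube_aux p hp
    simp only [Set.mem_ofPred_eq, e1, e2, e3]
  · rw [← t4]
    refine transfer_aux {p | rhoT p.1 p.2.1 > r₀ ∧ rhoT p.1 p.2.2 > r₀ ∧ rhoT p.2.1 p.2.2 > r₀} _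
      (by measurability) fun p hp => ?_
    obtain ⟨e1, e2, e3⟩ := rho_cube_aux p hp
    simp only [Set.mem_ofPred_eq, e1, e2, e3]
end

section
/- Let X₁, X₂, X₃ be independent uniformly distributed random points on [0,1], and let ρ_T(x,y) = min(|x−y|, 1−|x−y|) be the distance on the one-dimensional unit torus. Fix 1/3 < r₀ < 1/2. Then: (i) the probability that all three pairwise distances ρ_T(Xᵢ,Xⱼ) are less than r₀ equals 12r₀² − 6r₀ + 1; (ii) the probability that ρ_T(X₁,X₂) < r₀ and ρ_T(X₁,X₃) < r₀ but ρ_T(X₂,X₃) > r₀ equals −8r₀² + 6r₀ − 1; (iii) the probability that ρ_T(X₁,X₂) < r₀ but ρ_T(X₁,X₃) > r₀ and ρ_T(X₂,X₃) > r₀ equals (2r₀−1)²; (iv) the probability that all three pairwise distances exceed r₀ equals 0. -/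
open MeasureTheory

lemma rhoT_symm (x y : ℝ) : rhoT x y = rhoT y x := by
  unfold rhoT; rw [abs_sub_comm]

lemma rhoT_meas : Measurable (fun p : ℝ × ℝ => rhoT p.1 p.2) := by
  unfold rhoT; fun_prop

lemma far_slice (r x : ℝ) (h13 : 1/3 < r) (h12 : r < 1/2) (hx : x ∈ Set.Icc (0:ℝ) 1) :
    volume {y : ℝ | y ∈ Set.Icc (0:ℝ) 1 ∧ rhoT x y > r} = ENNReal.ofReal (1 - 2 * r) := by
  obtain ⟨hx0, hx1⟩ := hx
  rcases le_or_gt x r with h | h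
  · have : {y : ℝ | y ∈ Set.Icc (0:ℝ) 1 ∧ rhoT x y > r} = Set.Ioo (x + r) (x + 1 - r) := by
      ext y
      simp only [Set.mem_ofPred_eq, Set.mem_Icc, Set.mem_Ioo, rhoT, gt_iff_lt, lt_min_iff]
      constructor <;> grind
    rw [this, Real.volume_Ioo]; congr 1; ring
  · rcases lt_or_ge x (1 - r) with h' | h'
    · have : {y : ℝ | y ∈ Set.Icc (0:ℝ) 1 ∧ rhoT x y > r} =
          Set.Ico 0 (x - r) ∪ Set.Ioc (x + r) 1 := by
        ext y
        simp only [Set.mem_ofPred_eq, Set.mem_Icc, Set.mem_Ico, Set.mem_Ioc, Set.mem_union, rhoT,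
          gt_iff_lt, lt_min_iff]
        constructor <;> grind
      rw [this, measure_union _ measurableSet_Ioc, Real.volume_Ico, Real.volume_Ioc,
        ← ENNReal.ofReal_add (by linarith) (by linarith)]
      · congr 1; ring
      · rw [Set.disjoint_left]; rintro y ⟨_, h1⟩ ⟨h2, _⟩; linarith
    · have : {y : ℝ | y ∈ Set.Icc (0:ℝ) 1 ∧ rhoT x y > r} = Set.Ioo (x - 1 + r) (x - r) := by
        ext y
        simp only [Set.mem_ofPred_eq, Set.mem_Icc, Set.mem_Ioo, rhoT, gt_iff_lt, lt_min_iff]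
        constructor <;> grind
      rw [this, Real.volume_Ioo]; congr 1; ring

lemma near_slice (r x : ℝ) (h13 : 1/3 < r) (h12 : r < 1/2) (hx : x ∈ Set.Icc (0:ℝ) 1) :
    volume {y : ℝ | y ∈ Set.Icc (0:ℝ) 1 ∧ rhoT x y < r} = ENNReal.ofReal (2 * r) := by
  obtain ⟨hx0, hx1⟩ := hx
  rcases lt_or_ge x r with h | h
  · have : {y : ℝ | y ∈ Set.Icc (0:ℝ) 1 ∧ rhoT x y < r} =
        Set.Ico 0 (x + r) ∪ Set.Ioc (x + 1 - r) 1 := by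
      ext y
      simp only [Set.mem_ofPred_eq, Set.mem_Icc, Set.mem_Ico, Set.mem_Ioc, Set.mem_union, rhoT,
          min_lt_iff]
      constructor <;> grind
    rw [this, measure_union _ measurableSet_Ioc, Real.volume_Ico, Real.volume_Ioc,
        ← ENNReal.ofReal_add (by linarith) (by linarith)]
    · congr 1; ring
    · rw [Set.disjoint_left]; rintro y ⟨_, h1⟩ ⟨h2, _⟩; linarith
  · rcases le_or_gt x (1 - r) with h' | h'
    · have : volume {y : ℝ | y ∈ Set.Icc (0:ℝ) 1 ∧ rhoT x y < r} =
          volume (Set.Ioo (x - r) (x + r)) := by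
        apply measure_congr
        have h0 : ∀ᵐ y : ℝ, y ≠ 0 := by simp [ae_iff]
        have h1 : ∀ᵐ y : ℝ, y ≠ 1 := by simp [ae_iff]
        filter_upwards [h0, h1] with y h0 h1
        apply propext
        change (y ∈ Set.Icc (0:ℝ) 1 ∧ rhoT x y < r) ↔ y ∈ Set.Ioo (x - r) (x + r)
        simp only [Set.mem_Icc, Set.mem_Ioo, rhoT, min_lt_iff]
        constructor <;> grind
      rw [this, Real.volume_Ioo]; congr 1; ring
    · have : {y : ℝ | y ∈ Set.Icc (0:ℝ) 1 ∧ rhoT x y < r} =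
          Set.Ico 0 (x - 1 + r) ∪ Set.Ioc (x - r) 1 := by
        ext y
        simp only [Set.mem_ofPred_eq, Set.mem_Icc, Set.mem_Ico, Set.mem_Ioc, Set.mem_union, rhoT,
          min_lt_iff]
        constructor <;> grind
      rw [this, measure_union _ measurableSet_Ioc, Real.volume_Ico, Real.volume_Ioc,
        ← ENNReal.ofReal_add (by linarith) (by linarith)]
      · congr 1; ring
      · rw [Set.disjoint_left]; rintro y ⟨_, h1⟩ ⟨h2, _⟩; linarith

lemma meas1 (S : Set ℝ) (hS : MeasurableSet S) :
    MeasurableSet {p : ℝ × ℝ × ℝ | rhoT p.1 p.2.1 ∈ S} :=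
  (rhoT_meas.comp (by fun_prop : Measurable fun p : ℝ × ℝ × ℝ => (p.1, p.2.1))) hS

lemma meas2 (S : Set ℝ) (hS : MeasurableSet S) :
    MeasurableSet {p : ℝ × ℝ × ℝ | rhoT p.1 p.2.2 ∈ S} :=
  (rhoT_meas.comp (by fun_prop : Measurable fun p : ℝ × ℝ × ℝ => (p.1, p.2.2))) hS

lemma meas3 (S : Set ℝ) (hS : MeasurableSet S) :
    MeasurableSet {p : ℝ × ℝ × ℝ | rhoT p.2.1 p.2.2 ∈ S} :=
  (rhoT_meas.comp (by fun_prop : Measurable fun p : ℝ × ℝ × ℝ => (p.2.1, p.2.2))) hS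

lemma meas_cube : MeasurableSet unitCube3 :=
  measurableSet_Icc.prod (measurableSet_Icc.prod measurableSet_Icc)

/-- The event given by the three edge types. -/
def ev (A B C : Set ℝ) : Set (ℝ × ℝ × ℝ) :=
  {p | p ∈ unitCube3 ∧ rhoT p.1 p.2.1 ∈ A ∧ rhoT p.1 p.2.2 ∈ B ∧ rhoT p.2.1 p.2.2 ∈ C}

lemma meas_ev {A B C : Set ℝ} (hA : MeasurableSet A) (hB : MeasurableSet B)
    (hC : MeasurableSet C) : MeasurableSet (ev A B C) :=
  meas_cube.inter ((meas1 A hA).inter ((meas2 B hB).inter (meas3 C hC)))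

lemma two_edges (A B : Set ℝ) (hA : MeasurableSet A) (hB : MeasurableSet B) (a b : ENNReal)
    (ha : ∀ x ∈ Set.Icc (0:ℝ) 1, volume {y : ℝ | y ∈ Set.Icc (0:ℝ) 1 ∧ rhoT x y ∈ A} = a)
    (hb : ∀ x ∈ Set.Icc (0:ℝ) 1, volume {y : ℝ | y ∈ Set.Icc (0:ℝ) 1 ∧ rhoT x y ∈ B} = b) :
    volume (ev A B Set.univ) = a * b := by
  rw [Measure.volume_eq_prod, Measure.prod_apply (meas_ev hA hB MeasurableSet.univ)]
  have : ∀ x : ℝ, volume (Prod.mk x ⁻¹' ev A B Set.univ) =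
      (Set.Icc (0:ℝ) 1).indicator (fun _ => a * b) x := by
    intro x
    by_cases hx : x ∈ Set.Icc (0:ℝ) 1
    · rw [Set.indicator_of_mem hx, ← ha x hx, ← hb x hx, ← Measure.prod_prod,
        ← Measure.volume_eq_prod]
      congr 1
      ext ⟨y, z⟩
      simp only [ev, unitCube3, Set.mem_preimage, Set.mem_ofPred_eq, Set.mem_prod, Set.mem_univ]
      tauto
    · rw [Set.indicator_of_notMem hx]
      convert measure_empty (μ := (volume : Measure (ℝ × ℝ)))
      ext ⟨y, z⟩
      simp only [ev, unitCube3, Set.mem_preimage, Set.mem_ofPred_eq, Set.mem_prod, Set.mem_univ,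
        Set.mem_empty_iff_false]
      tauto
  simp_rw [this]
  rw [lintegral_indicator measurableSet_Icc]
  simp

lemma null_eq (r : ℝ) : volume {p : ℝ × ℝ × ℝ | rhoT p.2.1 p.2.2 ∈ ({r} : Set ℝ)} = 0 := by
  rw [Measure.volume_eq_prod, Measure.measure_prod_null (meas3 _ (measurableSet_singleton r))]
  refine Filter.Eventually.of_forall fun x => ?_
  change volume ((fun q : ℝ × ℝ => rhoT q.1 q.2) ⁻¹' ({r} : Set ℝ)) = 0
  rw [Measure.volume_eq_prod, Measure.measure_prod_null (rhoT_meas (measurableSet_singleton r))]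
  refine Filter.Eventually.of_forall fun y => ?_
  refine measure_mono_null (t := {y - r, y + r, y - 1 + r, y + 1 - r}) ?_
    (Set.Finite.measure_zero (by simp) _)
  intro z hz
  have hz : rhoT y z = r := hz
  simp only [rhoT] at hz
  simp only [Set.mem_insert_iff, Set.mem_singleton_iff]
  grind

lemma split3 (r : ℝ) (A B : Set ℝ) (hA : MeasurableSet A) (hB : MeasurableSet B) :
    volume (ev A B Set.univ) =
      volume (ev A B (Set.Iio r)) + volume (ev A B (Set.Ioi r)) := by
  rw [← measure_union _ (meas_ev hA hB measurableSet_Ioi)]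
  · apply measure_congr
    have h : ∀ᵐ p : ℝ × ℝ × ℝ, ¬ (rhoT p.2.1 p.2.2 ∈ ({r} : Set ℝ)) := by
      rw [ae_iff]; simpa using null_eq r
    filter_upwards [h] with p hp
    apply propext
    change p ∈ ev A B Set.univ ↔ p ∈ ev A B (Set.Iio r) ∪ ev A B (Set.Ioi r)
    have := lt_or_gt_of_ne (show rhoT p.2.1 p.2.2 ≠ r from hp)
    simp only [ev, Set.mem_union, Set.mem_ofPred_eq, Set.mem_univ, Set.mem_Iio, Set.mem_Ioi]
    tauto
  · rw [Set.disjoint_left]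
    rintro p ⟨_, _, _, h1⟩ ⟨_, _, _, h2⟩
    exact lt_asymm (Set.mem_Iio.1 h1) (Set.mem_Ioi.1 h2)

lemma rot (A B C : Set ℝ) (hA : MeasurableSet A) (hB : MeasurableSet B) (hC : MeasurableSet C) :
    volume (ev A B C) = volume (ev B C A) := by
  have h1 : MeasurePreserving (Prod.swap : ℝ × (ℝ × ℝ) → (ℝ × ℝ) × ℝ) volume volume :=
    Measure.measurePreserving_swap
  have h2 : MeasurePreserving (MeasurableEquiv.prodAssoc : (ℝ × ℝ) × ℝ ≃ᵐ ℝ × ℝ × ℝ)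
    volume volume := volume_preserving_prodAssoc
  rw [← (h2.comp h1).measure_preimage (meas_ev hA hB hC).nullMeasurableSet]
  congr 1
  ext ⟨x, y, z⟩
  change ((y, z, x) ∈ ev A B C) ↔ _
  simp only [ev, unitCube3, Set.mem_ofPred_eq, Set.mem_prod]
  rw [rhoT_symm y x, rhoT_symm z x]
  tauto

lemma far_empty (r : ℝ) (h13 : 1/3 < r) :
    ev (Set.Ioi r) (Set.Ioi r) (Set.Ioi r) = ∅ := by
  ext ⟨x, y, z⟩
  simp only [ev, Set.mem_ofPred_eq, Set.mem_Ioi, rhoT, lt_min_iff, Set.mem_empty_iff_false,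
    iff_false]
  rintro ⟨-, ⟨h1, h2⟩, ⟨h3, h4⟩, h5, h6⟩
  grind

theorem stmt_1 (r₀ : ℝ) (h13 : 1/3 < r₀) (h12 : r₀ < 1/2) :
    (volume {p : ℝ × ℝ × ℝ | p ∈ unitCube3 ∧
        rhoT p.1 p.2.1 < r₀ ∧ rhoT p.1 p.2.2 < r₀ ∧ rhoT p.2.1 p.2.2 < r₀}
      = ENNReal.ofReal (12 * r₀ ^ 2 - 6 * r₀ + 1)) ∧
    (volume {p : ℝ × ℝ × ℝ | p ∈ unitCube3 ∧
        rhoT p.1 p.2.1 < r₀ ∧ rhoT p.1 p.2.2 < r₀ ∧ rhoT p.2.1 p.2.2 > r₀}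
      = ENNReal.ofReal (-8 * r₀ ^ 2 + 6 * r₀ - 1)) ∧
    (volume {p : ℝ × ℝ × ℝ | p ∈ unitCube3 ∧
        rhoT p.1 p.2.1 < r₀ ∧ rhoT p.1 p.2.2 > r₀ ∧ rhoT p.2.1 p.2.2 > r₀}
      = ENNReal.ofReal ((2 * r₀ - 1) ^ 2)) ∧
    (volume {p : ℝ × ℝ × ℝ | p ∈ unitCube3 ∧
        rhoT p.1 p.2.1 > r₀ ∧ rhoT p.1 p.2.2 > r₀ ∧ rhoT p.2.1 p.2.2 > r₀}
      = 0) := by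
  have m1 : MeasurableSet (Set.Iio r₀) := measurableSet_Iio
  have m2 : MeasurableSet (Set.Ioi r₀) := measurableSet_Ioi
  have n := fun x hx => near_slice r₀ x h13 h12 hx
  have f := fun x hx => far_slice r₀ x h13 h12 hx
  have e1 := two_edges _ _ m1 m1 _ _ n n
  have e2 := two_edges _ _ m1 m2 _ _ n f
  have e3 := two_edges _ _ m2 m2 _ _ f f
  rw [split3 r₀ _ _ m1 m1, ← ENNReal.ofReal_mul (by linarith)] at e1
  rw [split3 r₀ _ _ m1 m2, ← ENNReal.ofReal_mul (by linarith)] at e2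
  rw [split3 r₀ _ _ m2 m2, ← ENNReal.ofReal_mul (by linarith), far_empty r₀ h13, measure_empty,
    add_zero] at e3
  have key : ∀ (u v : ENNReal) (s t : ℝ), 0 ≤ t → u + v = ENNReal.ofReal s →
      v = ENNReal.ofReal t → u = ENNReal.ofReal (s - t) := by
    intro u v s t ht h1 h2
    rw [ENNReal.ofReal_sub _ ht, ← h1, ← h2, ENNReal.add_sub_cancel_right]
    rw [h2]; exact ENNReal.ofReal_ne_top
  have iii : volume (ev (Set.Iio r₀) (Set.Ioi r₀) (Set.Ioi r₀)) = _ :=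
    (rot _ _ _ m1 m2 m2).trans e3
  have ii' := key _ _ _ _ (mul_self_nonneg _) e2 iii
  have ii : volume (ev (Set.Iio r₀) (Set.Iio r₀) (Set.Ioi r₀)) = _ :=
    (rot _ _ _ m1 m1 m2).trans ii'
  have i := key _ _ _ _ (by nlinarith) e1 ii
  refine ⟨i.trans ?_, ii.trans ?_, iii.trans ?_, ?_⟩
  · congr 1; ring
  · congr 1; ring
  · congr 1; ring
  · exact (congrArg volume (far_empty r₀ h13)).trans measure_empty
end

section
/- Define H : (0, 1/2) → ℝ by H(r₀) = −(1−3r₀)² log₂((1−3r₀)²) − 3(2r₀−5r₀²) log₂(2r₀−5r₀²) − 3r₀² log₂(r₀²) − 3r₀² log₂(3r₀²) for 0 < r₀ < 1/3, and H(r₀) = −(12r₀²−6r₀+1) log₂(12r₀²−6r₀+1) − 3(6r₀−1−8r₀²) log₂(6r₀−1−8r₀²) − 3(2r₀−1)² log₂((2r₀−1)²) for 1/3 ≤ r₀ < 1/2. Then H attains its maximum on (0,1/2) at r₀ = 1/4; that is, H(r₀) ≤ H(1/4) for all r₀ ∈ (0,1/2). -/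
open Real

/-- The exact Shannon entropy (base 2) of the ensemble of hard RGGs on 3 nodes
placed i.i.d. uniformly on the 1-dimensional unit torus, with connection radius `r₀`. -/
noncomputable def torusEntropy3 (r₀ : ℝ) : ℝ :=
  if r₀ < 1/3 then
    -(1 - 3*r₀)^2 * logb 2 ((1 - 3*r₀)^2)
      - 3 * (2*r₀ - 5*r₀^2) * logb 2 (2*r₀ - 5*r₀^2)
      - 3 * r₀^2 * logb 2 (r₀^2)
      - 3 * r₀^2 * logb 2 (3*r₀^2)
  else
    -(12*r₀^2 - 6*r₀ + 1) * logb 2 (12*r₀^2 - 6*r₀ + 1)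
      - 3 * (6*r₀ - 1 - 8*r₀^2) * logb 2 (6*r₀ - 1 - 8*r₀^2)
      - 3 * (2*r₀ - 1)^2 * logb 2 ((2*r₀ - 1)^2)

noncomputable def auxG (r : ℝ) : ℝ :=
  2 * ((1 - 3*r) * log (1 - 3*r)) - (1 - r) * log r - (1 - 5*r) * log (2 - 5*r) - r * log 3

noncomputable def auxG1 (r : ℝ) : ℝ :=
  -6 * log (1 - 3*r) + log r + 5 * log (2 - 5*r) - log 3 - 1/r - 5/(2 - 5*r)

noncomputable def auxG2 (r : ℝ) : ℝ :=
  18/(1 - 3*r) + 1/r - 25/(2 - 5*r) + 1/r^2 - 25/(2 - 5*r)^2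

noncomputable def auxF (r : ℝ) : ℝ :=
  -2 * (1 - 3*r)^2 * log (1 - 3*r) - (6*r - 15*r^2) * (log r + log (2 - 5*r))
    - 12 * r^2 * log r - 3 * r^2 * log 3

lemma d_log1 {r : ℝ} (h : r < 1/3) :
    HasDerivAt (fun r : ℝ => log (1 - 3*r)) (-3/(1 - 3*r)) r := by
  have h1 : HasDerivAt (fun r : ℝ => 1 - 3*r) (-3) r := by
    simpa using ((hasDerivAt_id r).const_mul (3:ℝ)).const_sub 1
  exact h1.log (by linarith)

lemma d_log2 {r : ℝ} (h : r < 1/3) :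
    HasDerivAt (fun r : ℝ => log (2 - 5*r)) (-5/(2 - 5*r)) r := by
  have h1 : HasDerivAt (fun r : ℝ => 2 - 5*r) (-5) r := by
    simpa using ((hasDerivAt_id r).const_mul (5:ℝ)).const_sub 2
  exact h1.log (by linarith)

lemma d_lin (a b r : ℝ) : HasDerivAt (fun r : ℝ => a - b*r) (-b) r := by
  simpa using ((hasDerivAt_id r).const_mul b).const_sub a

lemma d_G {r : ℝ} (h0 : 0 < r) (h : r < 1/3) : HasDerivAt auxG (auxG1 r) r := by
  have e1 : 1 - 3*r ≠ 0 := by linarith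
  have e2 : 2 - 5*r ≠ 0 := by linarith
  have e0 : r ≠ 0 := h0.ne'
  have := (((((d_lin 1 3 r).mul (d_log1 h)).const_mul 2).sub
    (((hasDerivAt_id r).const_sub 1).mul (Real.hasDerivAt_log e0))).sub
    ((d_lin 1 5 r).mul (d_log2 h))).sub ((hasDerivAt_id r).mul_const (log 3))
  refine this.congr_deriv ?_
  have k1 : (1 - 3*r) * (1 - 3*r)⁻¹ = 1 := mul_inv_cancel₀ e1
  have kv : (2 - 5*r) * (2 - 5*r)⁻¹ = 1 := mul_inv_cancel₀ e2
  have k0 : r * r⁻¹ = 1 := mul_inv_cancel₀ e0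
  simp only [auxG1, id]
  linear_combination -6*k1 + k0 + 5*kv

lemma d_G1 {r : ℝ} (h0 : 0 < r) (h : r < 1/3) : HasDerivAt auxG1 (auxG2 r) r := by
  have e1 : 1 - 3*r ≠ 0 := by linarith
  have e2 : 2 - 5*r ≠ 0 := by linarith
  have e0 : r ≠ 0 := h0.ne'
  have := ((((((d_log1 h).const_mul (-6)).add (Real.hasDerivAt_log e0)).add
    ((d_log2 h).const_mul 5)).sub_const (log 3)).sub
    ((hasDerivAt_const r (1:ℝ)).div (hasDerivAt_id r) e0)).sub
    ((hasDerivAt_const r (5:ℝ)).div (d_lin 2 5 r) e2)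
  refine this.congr_deriv ?_
  simp only [auxG2, id]
  field_simp
  ring

lemma d_F {r : ℝ} (h0 : 0 < r) (h : r < 1/3) : HasDerivAt auxF (6 * auxG r) r := by
  have e1 : 1 - 3*r ≠ 0 := by linarith
  have e2 : 2 - 5*r ≠ 0 := by linarith
  have e0 : r ≠ 0 := h0.ne'
  have hsq : HasDerivAt (fun r : ℝ => r^2) (2*r) r := by simpa using hasDerivAt_pow 2 r
  have := ((((((d_lin 1 3 r).pow 2).const_mul (-2)).mul (d_log1 h)).sub
    ((((hasDerivAt_id r).const_mul 6).sub (hsq.const_mul 15)).mul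
      ((Real.hasDerivAt_log e0).add (d_log2 h)))).sub
    ((hsq.const_mul 12).mul (Real.hasDerivAt_log e0))).sub
    ((hsq.const_mul 3).mul_const (log 3))
  refine this.congr_deriv ?_
  have k1 : (1 - 3*r) * (1 - 3*r)⁻¹ = 1 := mul_inv_cancel₀ e1
  have kv : (2 - 5*r) * (2 - 5*r)⁻¹ = 1 := mul_inv_cancel₀ e2
  have k0 : r * r⁻¹ = 1 := mul_inv_cancel₀ e0
  simp only [auxG, id, Pi.add_apply, Pi.sub_apply, Pi.pow_apply, Nat.cast_ofNat, Nat.add_one_sub_one, pow_one]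
  linear_combination 6*(1-3*r)*k1 + (-(6-15*r)-12*r)*k0 + 15*r*kv

lemma G2_nonneg {r : ℝ} (h0 : 0 < r) (h : r < 1/3) : 0 ≤ auxG2 r := by
  have e1 : 0 < 1 - 3*r := by linarith
  have e2 : 0 < 2 - 5*r := by linarith
  have : auxG2 r = (4 - 28*r + 50*r^2) / (r^2 * (1 - 3*r) * (2 - 5*r)^2) := by
    have e1' : 1 - 3*r ≠ 0 := by linarith
    have e2' : 2 - 5*r ≠ 0 := by linarith
    have e0' : r ≠ 0 := by linarith
    have gen : ∀ u v : ℝ, u ≠ 0 → v ≠ 0 → 18/u + 1/r - 25/v + 1/r^2 - 25/v^2 =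
        (18*r^2*v^2 + r*u*v^2 - 25*r^2*u*v + u*v^2 - 25*r^2*u) / (r^2*u*v^2) := by
      intro u v hu hv
      field_simp
    rw [auxG2, gen _ _ e1' e2']
    congr 1
    ring
  rw [this]
  apply div_nonneg _ (by positivity)
  nlinarith [sq_nonneg (r - 7/25)]

lemma G_convex : ConvexOn ℝ (Set.Ioc 0 (1/3)) auxG := by
  apply convexOn_of_hasDerivWithinAt2_nonneg (f' := auxG1) (f'' := auxG2) (convex_Ioc _ _)
  · have h1 : Continuous (fun r : ℝ => (1 - 3*r) * log (1 - 3*r)) :=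
      Real.continuous_mul_log.comp (by fun_prop : Continuous (fun r : ℝ => 1 - 3*r))
    have h2 : ContinuousOn (fun r : ℝ => log r) (Set.Ioc 0 (1/3)) :=
      continuousOn_id.log (fun x hx => hx.1.ne')
    have h3 : ContinuousOn (fun r : ℝ => log (2 - 5*r)) (Set.Ioc 0 (1/3)) := by
      apply ContinuousOn.log (by fun_prop)
      intro x hx
      have := hx.2
      linarith
    have h1' := h1.continuousOn (s := Set.Ioc 0 (1/3))
    unfold auxG
    fun_prop
  · intro x hx
    rw [interior_Ioc] at hx
    exact (d_G hx.1 hx.2).hasDerivWithinAt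
  · intro x hx
    rw [interior_Ioc] at hx
    exact (d_G1 hx.1 hx.2).hasDerivWithinAt
  · intro x hx
    rw [interior_Ioc] at hx
    exact G2_nonneg hx.1 hx.2

lemma G_quarter : auxG (1/4) = 0 := by
  have h : log (3/4) = log 3 - log 4 := Real.log_div (by norm_num) (by norm_num)
  have h' : log (1/4) = - log 4 := by rw [one_div, Real.log_inv]
  unfold auxG
  rw [show (1:ℝ) - 3*(1/4) = 1/4 by norm_num, show (2:ℝ) - 5*(1/4) = 3/4 by norm_num, h, h']
  ring

lemma G_third : auxG (1/3) ≤ 0 := by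
  have h' : log (1/3) = - log 3 := by rw [one_div, Real.log_inv]
  have := Real.log_pos (by norm_num : (1:ℝ) < 3)
  unfold auxG
  rw [show (1:ℝ) - 3*(1/3) = 0 by norm_num, show (2:ℝ) - 5*(1/3) = 1/3 by norm_num, h']
  linarith

lemma G_neg {r : ℝ} (h0 : 1/4 ≤ r) (h : r < 1/3) : auxG r ≤ 0 := by
  have := G_convex.2 (show (1/4:ℝ) ∈ _ by norm_num) (show (1/3:ℝ) ∈ _ by norm_num)
    (show 0 ≤ 12*(1/3 - r) by linarith) (show 0 ≤ 12*(r-1/4) by linarith) (by ring)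
  simp only [smul_eq_mul] at this
  rw [G_quarter, show 12*(1/3 - r)*(1/4) + 12*(r-1/4)*(1/3) = r by ring] at this
  nlinarith [G_third]

lemma G_pos {r : ℝ} (h0 : 0 < r) (h : r < 1/4) : 0 ≤ auxG r := by
  have hd : 0 < 1/3 - r := by linarith
  have := G_convex.2 (show r ∈ _ from ⟨h0, by linarith⟩) (show (1/3:ℝ) ∈ _ by norm_num)
    (show 0 ≤ (1/12)/(1/3 - r) by positivity)
    (show 0 ≤ (1/4 - r)/(1/3-r) from div_nonneg (by linarith) hd.le) (by rw [← add_div, div_eq_one_iff_eq hd.ne']; ring)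
  simp only [smul_eq_mul] at this
  rw [show (1/12)/(1/3 - r)*r + (1/4 - r)/(1/3-r)*(1/3) = 1/4 by
    have k : (1/3 - r) * (1/3 - r)⁻¹ = 1 := mul_inv_cancel₀ hd.ne'
    linear_combination (1/4) * k, G_quarter] at this
  have h2 : (1/4 - r)/(1/3-r) * auxG (1/3) ≤ 0 :=
    mul_nonpos_of_nonneg_of_nonpos (div_nonneg (by linarith) hd.le) G_third
  by_contra hc
  push Not at hc
  have : (1/12)/(1/3 - r) * auxG r < 0 := mul_neg_of_pos_of_neg (by positivity) hc
  linarith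

lemma F_le {r : ℝ} (h0 : 0 < r) (h : r < 1/3) : auxF r ≤ auxF (1/4) := by
  rcases lt_or_ge r (1/4) with hr | hr
  · have : MonotoneOn auxF (Set.Ioc 0 (1/4)) := by
      apply monotoneOn_of_hasDerivWithinAt_nonneg (f' := fun r => 6 * auxG r) (convex_Ioc _ _)
      · intro x hx
        exact (d_F hx.1 (by linarith [hx.2])).continuousAt.continuousWithinAt
      · intro x hx
        rw [interior_Ioc] at hx
        exact (d_F hx.1 (by linarith [hx.2])).hasDerivWithinAt
      · intro x hx
        rw [interior_Ioc] at hx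
        have := G_pos hx.1 hx.2
        positivity
    exact this ⟨h0, hr.le⟩ (by norm_num) hr.le
  · have : AntitoneOn auxF (Set.Ico (1/4) (1/3)) := by
      apply antitoneOn_of_hasDerivWithinAt_nonpos (f' := fun r => 6 * auxG r) (convex_Ico _ _)
      · intro x hx
        exact (d_F (by linarith [hx.1]) hx.2).continuousAt.continuousWithinAt
      · intro x hx
        rw [interior_Ico] at hx
        exact (d_F (by linarith [hx.1]) hx.2).hasDerivWithinAt
      · intro x hx
        rw [interior_Ico] at hx
        have := G_neg hx.1.le hx.2
        linarith
    exact this (by norm_num) ⟨hr, h⟩ hr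

lemma H_eq {r : ℝ} (h0 : 0 < r) (h : r < 1/3) : torusEntropy3 r = auxF r / log 2 := by
  have e2 : 2 - 5*r ≠ 0 := by linarith
  have e3 : 2*r - 5*r^2 = r * (2 - 5*r) := by ring
  have l2 := (Real.log_pos (by norm_num : (1:ℝ) < 2)).ne'
  rw [torusEntropy3, if_pos h, auxF]
  simp only [logb]
  rw [Real.log_mul (by norm_num) (by positivity), e3, Real.log_mul h0.ne' e2, Real.log_pow,
    Real.log_pow]
  push_cast
  field_simp
  ring

lemma gibbs7 {p : ℝ} (hp : 0 ≤ p) : -p * log p ≤ p * log 7 + 1/7 - p := by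
  rcases hp.eq_or_lt with rfl | hp
  · norm_num
  · have h := Real.log_le_sub_one_of_pos (show 0 < 1/(7*p) by positivity)
    rw [one_div, Real.log_inv, Real.log_mul (by norm_num) hp.ne'] at h
    have h2 := mul_le_mul_of_nonneg_left h hp.le
    have : p * ((7*p)⁻¹ - 1) = 1/7 - p := by field_simp
    linarith

lemma F_quarter : log 7 ≤ auxF (1/4) := by
  have h : log (3/4) = log 3 - log 4 := Real.log_div (by norm_num) (by norm_num)
  have h' : log (1/4) = - log 4 := by rw [one_div, Real.log_inv]
  have h4 : log 4 = 2 * log 2 := by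
    rw [show (4:ℝ) = 2^2 by norm_num, Real.log_pow]; norm_num
  have key : log ((3:ℝ)^3 * 7^4) ≤ log ((2:ℝ)^16) := Real.log_le_log (by norm_num) (by norm_num)
  rw [Real.log_mul (by norm_num) (by norm_num), Real.log_pow, Real.log_pow, Real.log_pow] at key
  push_cast at key
  have : auxF (1/4) = 4 * log 2 - 3/4 * log 3 := by
    unfold auxF
    rw [show (1:ℝ) - 3*(1/4) = 1/4 by norm_num, show (2:ℝ) - 5*(1/4) = 3/4 by norm_num, h, h', h4]
    ring
  linarith

theorem stmt_4 : ∀ r₀ ∈ Set.Ioo (0:ℝ) (1/2), torusEntropy3 r₀ ≤ torusEntropy3 (1/4) := by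
  rintro r ⟨h0, h1⟩
  have l2 := Real.log_pos (by norm_num : (1:ℝ) < 2)
  rw [H_eq (r := 1/4) (by norm_num) (by norm_num)]
  rcases lt_or_ge r (1/3) with hr | hr
  · rw [H_eq h0 hr]
    exact div_le_div_of_nonneg_right (F_le h0 hr) l2.le
  · rw [torusEntropy3, if_neg (not_lt.mpr hr), le_div_iff₀ l2]
    have g1 := gibbs7 (p := 12*r^2 - 6*r + 1) (by nlinarith [sq_nonneg (r - 1/4)])
    have g2 := gibbs7 (p := 6*r - 1 - 8*r^2) (by nlinarith)
    have g3 := gibbs7 (p := (2*r-1)^2) (sq_nonneg _)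
    have hF := F_quarter
    simp only [logb]
    have l2' := l2.ne'
    calc _ = -(12*r^2 - 6*r + 1) * log (12*r^2 - 6*r + 1)
          + 3 * (-(6*r - 1 - 8*r^2) * log (6*r - 1 - 8*r^2))
          + 3 * (-(2*r - 1)^2 * log ((2*r - 1)^2)) := by field_simp; ring
      _ ≤ log 7 := by linarith
      _ ≤ _ := hF
end

section
/- Let X, Y, Z be independent uniformly distributed random variables on [0,1] and let ρ_T(x,y) = min(|x−y|, 1−|x−y|). Then: (i) E[ρ_T(X,Y)²] = 1/12; (ii) E[(ρ_T(X,Y)² − 1/12)²] = 1/180; (iii) E[(ρ_T(X,Y)² − 1/12)(ρ_T(X,Z)² − 1/12)] = 0. -/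
open MeasureTheory

theorem rhoT_inner (G : ℝ → ℝ) (hG : Continuous G) (x : ℝ) (hx : x ∈ Set.Icc (0:ℝ) 1) :
    ∫ y in Set.Icc (0:ℝ) 1, G (rhoT x y) = 2 * ∫ t in (0:ℝ)..(1/2), G t := by
  obtain ⟨hx0, hx1⟩ := hx
  set h : ℝ → ℝ := fun t => G (min |t| (1 - |t|)) with hh
  have hc : Continuous h := by fun_prop
  have hi : ∀ a b, IntervalIntegrable h volume a b := fun a b => hc.intervalIntegrable a b
  rw [integral_Icc_eq_integral_Ioc, ← intervalIntegral.integral_of_le zero_le_one]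
  have e1 : ∫ y in (0:ℝ)..1, G (rhoT x y) = ∫ t in (x-1)..x, h t := by
    have := intervalIntegral.integral_comp_sub_left (a := 0) (b := 1) h x
    simpa [hh, rhoT] using this
  have e2 : ∫ t in (x-1)..0, h t = ∫ t in x..1, h t := by
    have := intervalIntegral.integral_comp_sub_right (a := x) (b := 1) h 1
    rw [sub_self] at this
    rw [← this]
    apply intervalIntegral.integral_congr
    intro t ht
    rw [Set.uIcc_of_le hx1] at ht
    simp only [hh]
    rw [abs_of_nonpos (by linarith [ht.2] : t - 1 ≤ 0), abs_of_nonneg (by linarith [ht.1] : 0 ≤ t),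
      min_comm]
    congr 2 <;> ring
  have e3 : ∫ t in (0:ℝ)..(1/2), h t = ∫ t in (0:ℝ)..(1/2), G t := by
    apply intervalIntegral.integral_congr
    intro t ht
    rw [Set.uIcc_of_le (by norm_num)] at ht
    simp only [hh]
    rw [abs_of_nonneg ht.1, min_eq_left (by linarith [ht.2])]
  have e4 : ∫ t in (1/2:ℝ)..1, h t = ∫ t in (0:ℝ)..(1/2), G t := by
    have := intervalIntegral.integral_comp_sub_left (a := 1/2) (b := 1) G 1
    rw [sub_self, show (1:ℝ) - 1/2 = 1/2 by norm_num] at this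
    rw [← this]
    apply intervalIntegral.integral_congr
    intro t ht
    rw [Set.uIcc_of_le (by norm_num)] at ht
    simp only [hh]
    rw [abs_of_nonneg (by linarith [ht.1]), min_eq_right (by linarith [ht.1])]
  rw [e1, ← intervalIntegral.integral_add_adjacent_intervals (hi (x-1) 0) (hi 0 x), e2, add_comm,
    intervalIntegral.integral_add_adjacent_intervals (hi 0 x) (hi x 1),
    ← intervalIntegral.integral_add_adjacent_intervals (hi 0 (1/2)) (hi (1/2) 1), e3, e4]
  ring

theorem rhoT_outer (F : ℝ → ℝ) (c : ℝ) (hF : ∀ x ∈ Set.Icc (0:ℝ) 1, F x = c) :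
    ∫ x in Set.Icc (0:ℝ) 1, F x = c := by
  rw [setIntegral_congr_fun measurableSet_Icc hF]
  simp

/-- For `X, Y, Z` i.i.d. uniform on `[0,1]`:
(i) `E[ρ_T(X,Y)²] = 1/12`;
(ii) `E[(ρ_T(X,Y)² − 1/12)²] = 1/180`;
(iii) `E[(ρ_T(X,Y)² − 1/12)(ρ_T(X,Z)² − 1/12)] = 0`. -/
theorem stmt_5 :
    (∫ x in Set.Icc (0:ℝ) 1, ∫ y in Set.Icc (0:ℝ) 1, rhoT x y ^ 2 = 1/12) ∧
    (∫ x in Set.Icc (0:ℝ) 1, ∫ y in Set.Icc (0:ℝ) 1, (rhoT x y ^ 2 - 1/12) ^ 2 = 1/180) ∧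
    (∫ x in Set.Icc (0:ℝ) 1, ∫ y in Set.Icc (0:ℝ) 1, ∫ z in Set.Icc (0:ℝ) 1,
        (rhoT x y ^ 2 - 1/12) * (rhoT x z ^ 2 - 1/12) = 0) := by
  have k3 : ∀ x ∈ Set.Icc (0:ℝ) 1, ∫ z in Set.Icc (0:ℝ) 1, (rhoT x z ^ 2 - 1/12) = 0 := by
    intro x hx
    rw [rhoT_inner (fun t => t ^ 2 - 1/12) (by fun_prop) x hx,
      intervalIntegral.integral_sub (Continuous.intervalIntegrable (by fun_prop) _ _)
        (Continuous.intervalIntegrable (by fun_prop) _ _), integral_pow]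
    norm_num
  refine ⟨rhoT_outer _ _ fun x hx => ?_, rhoT_outer _ _ fun x hx => ?_,
    rhoT_outer _ _ fun x hx => ?_⟩
  · rw [rhoT_inner (fun t => t ^ 2) (by fun_prop) x hx, integral_pow]
    norm_num
  · rw [rhoT_inner (fun t => (t ^ 2 - 1/12) ^ 2) (by fun_prop) x hx]
    have : ∀ t : ℝ, (t ^ 2 - 1/12) ^ 2 = t ^ 4 - (1/6) * t ^ 2 + 1/144 := fun t => by ring
    simp only [this]
    rw [intervalIntegral.integral_add (Continuous.intervalIntegrable (by fun_prop) _ _)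
        (Continuous.intervalIntegrable (by fun_prop) _ _),
      intervalIntegral.integral_sub (Continuous.intervalIntegrable (by fun_prop) _ _)
        (Continuous.intervalIntegrable (by fun_prop) _ _),
      intervalIntegral.integral_const_mul, integral_pow, integral_pow]
    norm_num
  · simp only [integral_const_mul, k3 x hx, mul_zero, integral_zero]
end

section
/- Let X, Y, Z be i.i.d. real-valued random variables with finite fourth moment, and let μ = E[(X−Y)²]. Then E[((X−Y)² − μ)((Y−Z)² − μ)] = E[(Y − E[Y])⁴] − (E[(Y − E[Y])²])². In particular, this covariance is zero if and only if the kurtosis of the common distribution equals 1, and it is strictly positive whenever the kurtosis exceeds 1. -/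
open MeasureTheory ProbabilityTheory

private theorem hadd {Ω : Type*} [MeasurableSpace Ω] {P : Measure Ω} {f g : Ω → ℝ} {u v : ℝ}
    (hf : Integrable f P ∧ ∫ ω, f ω ∂P = u) (hg : Integrable g P ∧ ∫ ω, g ω ∂P = v) :
    Integrable (fun ω => f ω + g ω) P ∧ ∫ ω, (f ω + g ω) ∂P = u + v :=
  ⟨hf.1.add hg.1, by rw [integral_add hf.1 hg.1, hf.2, hg.2]⟩

private theorem hmulc {Ω : Type*} [MeasurableSpace Ω] {P : Measure Ω} {f : Ω → ℝ} {u : ℝ} (c : ℝ)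
    (hf : Integrable f P ∧ ∫ ω, f ω ∂P = u) :
    Integrable (fun ω => c * f ω) P ∧ ∫ ω, c * f ω ∂P = c * u :=
  ⟨hf.1.const_mul c, by rw [integral_const_mul, hf.2]⟩

/-- For `X, Y, Z` i.i.d. real random variables with finite fourth moment and
`μ = E[(X−Y)²]`, one has
`E[((X−Y)² − μ)((Y−Z)² − μ)] = E[(Y−EY)⁴] − (E[(Y−EY)²])²`.
In particular (when the variance is nonzero) this covariance vanishes iff the
kurtosis equals 1, and is strictly positive whenever the kurtosis exceeds 1. -/
theorem stmt_7 {Ω : Type*} [MeasurableSpace Ω] (P : Measure Ω) [IsProbabilityMeasure P]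
    (X Y Z : Ω → ℝ)
    (hindep : iIndepFun ![X, Y, Z] P)
    (hXY : Measure.map X P = Measure.map Y P)
    (hXZ : Measure.map X P = Measure.map Z P)
    (hX : Measurable X) (hY : Measurable Y) (hZ : Measurable Z)
    (hL4 : MemLp X 4 P)
    (μ m : ℝ)
    (hμ : μ = ∫ ω, (X ω - Y ω) ^ 2 ∂P)
    (hm : m = ∫ ω, Y ω ∂P) :
    ((∫ ω, ((X ω - Y ω) ^ 2 - μ) * ((Y ω - Z ω) ^ 2 - μ) ∂P)
        = (∫ ω, (Y ω - m) ^ 4 ∂P) - (∫ ω, (Y ω - m) ^ 2 ∂P) ^ 2) ∧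
    ((∫ ω, (Y ω - m) ^ 2 ∂P) ≠ 0 →
      (((∫ ω, ((X ω - Y ω) ^ 2 - μ) * ((Y ω - Z ω) ^ 2 - μ) ∂P) = 0 ↔
          (∫ ω, (Y ω - m) ^ 4 ∂P) / ((∫ ω, (Y ω - m) ^ 2 ∂P) ^ 2) = 1) ∧
        ((∫ ω, (Y ω - m) ^ 4 ∂P) / ((∫ ω, (Y ω - m) ^ 2 ∂P) ^ 2) > 1 →
          0 < ∫ ω, ((X ω - Y ω) ^ 2 - μ) * ((Y ω - Z ω) ^ 2 - μ) ∂P))) := by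
  have hmain : (∫ ω, ((X ω - Y ω) ^ 2 - μ) * ((Y ω - Z ω) ^ 2 - μ) ∂P)
        = (∫ ω, (Y ω - m) ^ 4 ∂P) - (∫ ω, (Y ω - m) ^ 2 ∂P) ^ 2 := by
    have iXY : IdentDistrib X Y P P := ⟨hX.aemeasurable, hY.aemeasurable, hXY⟩
    have iXZ : IdentDistrib X Z P P := ⟨hX.aemeasurable, hZ.aemeasurable, hXZ⟩
    have hmp : ∀ k : ℕ, Measurable (fun x : ℝ => (x - m) ^ k) := fun k => by fun_prop
    have jXY : ∀ k : ℕ, IdentDistrib (fun ω => (X ω - m) ^ k) (fun ω => (Y ω - m) ^ k) P P :=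
      fun k => iXY.comp (hmp k)
    have jXZ : ∀ k : ℕ, IdentDistrib (fun ω => (X ω - m) ^ k) (fun ω => (Z ω - m) ^ k) P P :=
      fun k => iXZ.comp (hmp k)
    have aI : ∀ k : ℕ, k ≤ 4 → Integrable (fun ω => (X ω - m) ^ k) P := by
      intro k hk
      have h1 : MemLp (fun ω => X ω - m) 4 P := hL4.sub (memLp_const m)
      have h2 : MemLp (fun ω => X ω - m) (k : ℕ) P :=
        h1.mono_exponent (by exact_mod_cast hk)
      have h3 := h2.integrable_norm_pow'
      refine h3.mono' (by fun_prop) (ae_of_all _ fun ω => ?_)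
      simp
    have bI : ∀ k : ℕ, k ≤ 4 → Integrable (fun ω => (Y ω - m) ^ k) P :=
      fun k hk => (jXY k).integrable_iff.1 (aI k hk)
    have cI : ∀ k : ℕ, k ≤ 4 → Integrable (fun ω => (Z ω - m) ^ k) P :=
      fun k hk => (jXZ k).integrable_iff.1 (aI k hk)
    obtain ⟨M, hM⟩ : ∃ M : ℕ → ℝ, ∀ k, M k = ∫ ω, (Y ω - m) ^ k ∂P := ⟨_, fun _ => rfl⟩
    have aM : ∀ k, ∫ ω, (X ω - m) ^ k ∂P = M k := fun k => by rw [hM, (jXY k).integral_eq]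
    have cM : ∀ k, ∫ ω, (Z ω - m) ^ k ∂P = M k := fun k => by rw [← (jXZ k).integral_eq, aM]
    have M0 : M 0 = 1 := by simp [hM]
    have M1 : M 1 = 0 := by
      have hYi : Integrable Y P := iXY.integrable_iff.1 (hL4.integrable (by norm_num))
      simp only [hM, pow_one]
      rw [integral_sub hYi (integrable_const m)]
      simp [hm]
    have hmeas : ∀ i, Measurable (![X, Y, Z] i) := by
      intro i; fin_cases i <;> simpa
    have iYZ : IndepFun Y Z P := by
      simpa using hindep.indepFun (show (1 : Fin 3) ≠ 2 by decide)
    have iX : IndepFun X (fun ω => (Y ω, Z ω)) P := by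
      have := hindep.indepFun_prodMk hmeas 1 2 0 (by decide) (by decide)
      simpa using this.symm
    have hF : ∀ i j k : ℕ, i ≤ 4 → j ≤ 4 → k ≤ 4 →
        Integrable (fun ω => (X ω - m) ^ i * ((Y ω - m) ^ j * (Z ω - m) ^ k)) P ∧
        ∫ ω, (X ω - m) ^ i * ((Y ω - m) ^ j * (Z ω - m) ^ k) ∂P = M i * (M j * M k) := by
      intro i j k hi hj hk
      have h1 : IndepFun (fun ω => (Y ω - m) ^ j) (fun ω => (Z ω - m) ^ k) P :=
        iYZ.comp (hmp j) (hmp k)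
      have h2 : IndepFun (fun ω => (X ω - m) ^ i)
          (fun ω => (Y ω - m) ^ j * (Z ω - m) ^ k) P :=
        iX.comp (ψ := fun p : ℝ × ℝ => (p.1 - m) ^ j * (p.2 - m) ^ k) (hmp i) (by fun_prop)
      have h3 : Integrable (fun ω => (Y ω - m) ^ j * (Z ω - m) ^ k) P :=
        h1.integrable_mul (bI j hj) (cI k hk)
      refine ⟨h2.integrable_mul (aI i hi) h3, ?_⟩
      rw [h2.integral_fun_mul_eq_mul_integral (aI i hi).1 h3.1,
        h1.integral_fun_mul_eq_mul_integral (bI j hj).1 (cI k hk).1, aM, cM, ← hM]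
    have F : ∀ (c : ℝ) (i j k : ℕ), i ≤ 4 → j ≤ 4 → k ≤ 4 → _ :=
      fun c i j k hi hj hk => hmulc c (hF i j k hi hj hk)
    have hμ2 : μ = 2 * M 2 := by
      have h := (hadd (hadd (F 1 2 0 0 (by simp) (by simp) (by simp))
        (F (-2) 1 1 0 (by simp) (by simp) (by simp)))
        (F 1 0 2 0 (by simp) (by simp) (by simp))).2
      rw [hμ]
      refine Eq.trans (integral_congr_ae (ae_of_all _ fun ω => ?_)) (h.trans ?_)
      · ring
      · rw [M0, M1]; ring
    have hs := (hadd (hadd (hadd (hadd (hadd (hadd (hadd (hadd (hadd (hadd (hadd (hadd (hadd (hadd (F 1 2 2 0 (by simp) (by simp) (by simp))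
      (F (-2) 2 1 1 (by simp) (by simp) (by simp)))
      (F 1 2 0 2 (by simp) (by simp) (by simp)))
      (F (-μ) 2 0 0 (by simp) (by simp) (by simp)))
      (F (-2) 1 3 0 (by simp) (by simp) (by simp)))
      (F 4 1 2 1 (by simp) (by simp) (by simp)))
      (F (-2) 1 1 2 (by simp) (by simp) (by simp)))
      (F (2*μ) 1 1 0 (by simp) (by simp) (by simp)))
      (F 1 0 4 0 (by simp) (by simp) (by simp)))
      (F (-2) 0 3 1 (by simp) (by simp) (by simp)))
      (F 1 0 2 2 (by simp) (by simp) (by simp)))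
      (F (-2*μ) 0 2 0 (by simp) (by simp) (by simp)))
      (F (2*μ) 0 1 1 (by simp) (by simp) (by simp)))
      (F (-μ) 0 0 2 (by simp) (by simp) (by simp)))
      (F (μ^2) 0 0 0 (by simp) (by simp) (by simp)))
    rw [← hM, ← hM]
    refine Eq.trans (integral_congr_ae (ae_of_all _ fun ω => ?_)) (hs.2.trans ?_)
    · ring
    · rw [M0, M1, hμ2]; ring
  refine ⟨hmain, fun hs => ?_⟩
  have hp : 0 < (∫ ω, (Y ω - m) ^ 2 ∂P) ^ 2 := by positivity
  rw [hmain]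
  constructor
  · rw [div_eq_one_iff_eq hp.ne', sub_eq_zero]
  · intro h
    rw [gt_iff_lt, one_lt_div hp] at h
    linarith
end

section
/- Let X be a real-valued random variable with finite fourth moment, mean μ = E[X], and suppose E[(X−μ)⁴] = (E[(X−μ)²])². Then there exists a constant c ≥ 0 such that X ∈ {μ−c, μ+c} almost surely; moreover, if X is not almost surely constant, then c > 0 and P(X = μ−c) = P(X = μ+c) = 1/2. -/
open MeasureTheory

/-- A real random variable with finite fourth moment whose fourth central moment equals
the square of its variance (kurtosis 1) is supported on two points `μ ± c` symmetric about
its mean; if it is not a.s. constant then `c > 0` and the two points have probability 1/2. -/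
theorem stmt_8 {Ω : Type*} [MeasurableSpace Ω] (P : Measure Ω) [IsProbabilityMeasure P]
    (X : Ω → ℝ) (hX : Measurable X) (hL4 : MemLp X 4 P)
    (μ : ℝ) (hμ : μ = ∫ ω, X ω ∂P)
    (h : (∫ ω, (X ω - μ) ^ 4 ∂P) = (∫ ω, (X ω - μ) ^ 2 ∂P) ^ 2) :
    ∃ c : ℝ, 0 ≤ c ∧ (∀ᵐ ω ∂P, X ω = μ - c ∨ X ω = μ + c) ∧
      ((¬ ∃ k : ℝ, ∀ᵐ ω ∂P, X ω = k) →
        0 < c ∧ P {ω | X ω = μ - c} = 1/2 ∧ P {ω | X ω = μ + c} = 1/2) := by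
  have hY4 : MemLp (fun ω => X ω - μ) 4 P := hL4.sub (memLp_const μ)
  have hY2 : MemLp (fun ω => X ω - μ) 2 P := hY4.mono_exponent (by norm_num)
  have hX1 : Integrable X P := hL4.integrable (by norm_num)
  have i2 : Integrable (fun ω => (X ω - μ) ^ 2) P := hY2.integrable_sq
  have i4 : Integrable (fun ω => (X ω - μ) ^ 4) P := by
    have := hY4.integrable_norm_pow (p := 4) (by norm_num)
    refine this.congr (Filter.Eventually.of_forall fun ω => ?_)
    simp only [Real.norm_eq_abs]
    exact Even.pow_abs (by decide) _
  set V := ∫ ω, (X ω - μ) ^ 2 ∂P with hV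
  have hV0 : 0 ≤ V := integral_nonneg fun ω => sq_nonneg _
  have hexp : (fun ω => ((X ω - μ) ^ 2 - V) ^ 2)
      = fun ω => ((X ω - μ) ^ 4 - 2 * V * (X ω - μ) ^ 2) + V ^ 2 := by
    funext ω; ring
  have i5 : Integrable (fun ω => (X ω - μ) ^ 4 - 2 * V * (X ω - μ) ^ 2) P :=
    i4.sub (i2.const_mul _)
  have hint : Integrable (fun ω => ((X ω - μ) ^ 2 - V) ^ 2) P := by
    rw [hexp]; exact i5.add (integrable_const _)
  have hz : ∫ ω, ((X ω - μ) ^ 2 - V) ^ 2 ∂P = 0 := by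
    rw [hexp, integral_add i5 (integrable_const _), integral_sub i4 (i2.const_mul _),
      integral_const_mul, h, ← hV]
    simp
    ring
  have hae := (integral_eq_zero_iff_of_nonneg (fun ω => sq_nonneg _) hint).1 hz
  have hc : Real.sqrt V ^ 2 = V := Real.sq_sqrt hV0
  have hc0 : 0 ≤ Real.sqrt V := Real.sqrt_nonneg V
  generalize Real.sqrt V = c at hc hc0
  have key : ∀ᵐ ω ∂P, X ω = μ - c ∨ X ω = μ + c := by
    filter_upwards [hae] with ω hω
    have h1 : (X ω - μ) ^ 2 - V = 0 := by simpa using hω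
    have h2 : (X ω - (μ - c)) * (X ω - (μ + c)) = 0 := by rw [← hc] at h1; linarith
    rcases mul_eq_zero.1 h2 with h3 | h3
    · left; linarith
    · right; linarith
  refine ⟨c, hc0, key, fun hn => ?_⟩
  have hcp : 0 < c := by
    rcases hc0.eq_or_lt with h0 | h0
    · exact absurd ⟨μ, by filter_upwards [key] with ω hω; subst h0; simpa using hω⟩ hn
    · exact h0
  have hB : MeasurableSet {ω | X ω = μ + c} := hX (measurableSet_singleton _)
  have half : ∀ S : Set Ω, P.real S = 1 / 2 → P S = 1 / 2 := by
    intro S hS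
    rw [← ENNReal.ofReal_toReal (measure_ne_top P S)]
    change ENNReal.ofReal (P.real S) = _
    rw [hS, ENNReal.ofReal_div_of_pos (by norm_num)]
    simp
  have hBr : P.real {ω | X ω = μ + c} = 1 / 2 := by
    have e1 : ∫ ω, (X ω - (μ - c)) ∂P = c := by
      rw [integral_sub hX1 (integrable_const _), ← hμ]; simp
    have e2 : ∫ ω, (X ω - (μ - c)) ∂P
        = ∫ ω, {ω | X ω = μ + c}.indicator (fun _ => 2 * c) ω ∂P := by
      apply integral_congr_ae
      filter_upwards [key] with ω hω
      by_cases hb : X ω = μ + c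
      · rw [Set.indicator_of_mem (by exact hb), hb]; ring
      · rw [Set.indicator_of_notMem (by exact hb), hω.resolve_right hb]; ring
    rw [e1, integral_indicator_const _ hB, smul_eq_mul] at e2
    have : c * (P.real {ω | X ω = μ + c} - 1 / 2) = 0 := by linarith
    rcases mul_eq_zero.1 this with h3 | h3 <;> linarith
  refine ⟨hcp, half _ ?_, half _ hBr⟩
  have e : P.real {ω | X ω = μ - c} = P.real {ω | X ω = μ + c}ᶜ := by
    apply measureReal_congr
    filter_upwards [key] with ω hω
    apply propext
    change X ω = μ - c ↔ ¬ X ω = μ + c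
    constructor
    · intro h1 h2; linarith
    · intro h1; exact hω.resolve_right h1
  rw [e, probReal_compl_eq_one_sub hB, hBr]
  norm_num
end

section
/- Let π be a probability density on [0,1] (π ≥ 0 measurable with ∫₀¹ π = 1), and let ρ_T(x,y) = min(|x−y|, 1−|x−y|). Suppose there is a constant C such that ∫₀¹ ρ_T(x,y)² π(y) dy = C for Lebesgue-almost every x ∈ [0,1]. Then π(x) = 1 for almost every x ∈ [0,1], i.e. π is the uniform density. -/
open MeasureTheory

theorem aux_local (f : ℝ → ℝ) (hf : Integrable f) (hg : Integrable (fun y => y * f y))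
    (U : Set ℝ) (hU : IsOpen U) (a b : ℝ)
    (h : ∀ᵐ s, s ∈ U → s * (∫ y in (0:ℝ)..s, f y) - (∫ y in (0:ℝ)..s, y * f y)
      = s ^ 2 / 2 + a * s + b) :
    ∀ᵐ s, s ∈ U → f s = 1 := by
  have cP : Continuous (fun s : ℝ => ∫ y in (0:ℝ)..s, f y) :=
    intervalIntegral.continuous_primitive (fun _ _ => hf.intervalIntegrable) 0
  have cQ : Continuous (fun s : ℝ => ∫ y in (0:ℝ)..s, y * f y) :=
    intervalIntegral.continuous_primitive (fun _ _ => hg.intervalIntegrable) 0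
  have dP := LocallyIntegrable.ae_hasDerivAt_integral hf.locallyIntegrable
  have dQ := LocallyIntegrable.ae_hasDerivAt_integral hg.locallyIntegrable
  have e1 : Set.EqOn (fun s : ℝ => s * (∫ y in (0:ℝ)..s, f y) - (∫ y in (0:ℝ)..s, y * f y))
      (fun s => s ^ 2 / 2 + a * s + b) U := by
    refine Measure.eqOn_open_of_ae_eq (μ := volume) ?_ hU ?_ ?_
    · exact (ae_restrict_iff' hU.measurableSet).2 h
    · exact ((continuous_id.mul cP).sub cQ).continuousOn
    · exact Continuous.continuousOn (by fun_prop)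
  have e2 : Set.EqOn (fun s : ℝ => ∫ y in (0:ℝ)..s, f y) (fun s => s + a) U := by
    refine Measure.eqOn_open_of_ae_eq (μ := volume) ?_ hU cP.continuousOn ?_
    · refine (ae_restrict_iff' hU.measurableSet).2 ?_
      filter_upwards [dP, dQ] with s h1 h2 hs
      have d1 := ((hasDerivAt_id s).mul (h1 0)).sub (h2 0)
      have d2 : HasDerivAt (fun s : ℝ => s ^ 2 / 2 + a * s + b) (s + a) s := by
        have := ((((hasDerivAt_id s).pow 2).div_const 2).add
          ((hasDerivAt_id s).const_mul a)).add_const b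
        refine this.congr_deriv ?_
        simp
      have d3 := d2.congr_of_eventuallyEq (e1.eventuallyEq_of_mem (hU.mem_nhds hs))
      have := d1.unique d3
      simp at this
      linarith
    · exact Continuous.continuousOn (by fun_prop)
  filter_upwards [dP] with s h1 hs
  have d2 : HasDerivAt (fun s : ℝ => s + a) 1 s := (hasDerivAt_id s).add_const a
  exact (h1 0).unique (d2.congr_of_eventuallyEq (e2.eventuallyEq_of_mem (hU.mem_nhds hs)))

/-- If `π` is a probability density on `[0,1]` such that the torus convolution
`x ↦ ∫₀¹ ρ_T(x,y)² π(y) dy` is a.e. constant, then `π` is the uniform density. -/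
theorem stmt_9 (π : ℝ → ℝ) (hmeas : Measurable π)
    (hnonneg : ∀ x ∈ Set.Icc (0:ℝ) 1, 0 ≤ π x)
    (hone : ∫ x in Set.Icc (0:ℝ) 1, π x = 1)
    (C : ℝ)
    (hC : ∀ᵐ x ∂(volume.restrict (Set.Icc (0:ℝ) 1)),
      (∫ y in Set.Icc (0:ℝ) 1, rhoT x y ^ 2 * π y) = C) :
    ∀ᵐ x ∂(volume.restrict (Set.Icc (0:ℝ) 1)), π x = 1 := by
  have hi : IntegrableOn π (Set.Icc 0 1) := by
    by_contra hn
    rw [integral_undef hn] at hone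
    exact zero_ne_one hone
  have hi1 : IntegrableOn (fun y => y * π y) (Set.Icc 0 1) :=
    hi.continuousOn_mul (by fun_prop) isCompact_Icc
  have hi2 : IntegrableOn (fun y => y ^ 2 * π y) (Set.Icc 0 1) :=
    hi.continuousOn_mul (by fun_prop) isCompact_Icc
  set f : ℝ → ℝ := (Set.Icc (0:ℝ) 1).indicator π with hfdef
  have hf : Integrable f := (integrable_indicator_iff measurableSet_Icc).2 hi
  have hyf : (fun y => y * f y) = (Set.Icc (0:ℝ) 1).indicator (fun y => y * π y) := by
    ext y; by_cases hy : y ∈ Set.Icc (0:ℝ) 1 <;> simp only [hfdef, Set.indicator, hy, if_true, if_false, mul_zero]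
  have hg : Integrable (fun y => y * f y) := by
    rw [hyf]; exact (integrable_indicator_iff measurableSet_Icc).2 hi1
  set m1 := ∫ y in Set.Icc (0:ℝ) 1, y * π y with hm1
  set m2 := ∫ y in Set.Icc (0:ℝ) 1, y ^ 2 * π y with hm2
  have hK : ∀ s ∈ Set.Ioo (0:ℝ) 1,
      ∫ y in Set.Icc (0:ℝ) 1, (Set.Iic s).indicator (fun y => s * π y - y * π y) y =
      s * (∫ y in (0:ℝ)..s, f y) - (∫ y in (0:ℝ)..s, y * f y) := by
    intro s hs
    rw [setIntegral_indicator measurableSet_Iic, ← intervalIntegral.integral_const_mul,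
      ← intervalIntegral.integral_sub (hf.intervalIntegrable.const_mul s) hg.intervalIntegrable,
      intervalIntegral.integral_of_le hs.1.le, ← integral_Icc_eq_integral_Ioc]
    have : Set.Icc (0:ℝ) 1 ∩ Set.Iic s = Set.Icc 0 s := by
      ext y; simp only [Set.mem_inter_iff, Set.mem_Icc, Set.mem_Iic]
      have := hs.2
      constructor
      · rintro ⟨⟨h1, h2⟩, h3⟩; exact ⟨h1, h3⟩
      · rintro ⟨h1, h2⟩; exact ⟨⟨h1, by linarith⟩, h2⟩
    rw [this]
    refine setIntegral_congr_fun measurableSet_Icc (fun y hy => ?_)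
    have : y ∈ Set.Icc (0:ℝ) 1 := ⟨hy.1, hy.2.trans hs.2.le⟩
    simp [hfdef, Set.indicator_of_mem this]
  have hiK : ∀ s : ℝ, IntegrableOn ((Set.Iic s).indicator (fun y => s * π y - y * π y))
      (Set.Icc 0 1) := fun s =>
    Integrable.indicator ((Integrable.const_mul hi s).sub hi1) measurableSet_Iic
  -- general expansion
  have hexp : ∀ α β γ s : ℝ, ∫ y in Set.Icc (0:ℝ) 1,
      (((α * π y + β * (y * π y)) + γ * (y ^ 2 * π y)) -
        2 * (Set.Iic s).indicator (fun y => s * π y - y * π y) y)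
      = α + β * m1 + γ * m2 -
        2 * ∫ y in Set.Icc (0:ℝ) 1, (Set.Iic s).indicator (fun y => s * π y - y * π y) y := by
    intro α β γ s
    have i0 := Integrable.const_mul hi α
    have i1 := Integrable.const_mul hi1 β
    have i2 := Integrable.const_mul hi2 γ
    have i01 : IntegrableOn (fun y => α * π y + β * (y * π y)) (Set.Icc 0 1) := i0.add i1
    have i012 : IntegrableOn (fun y => (α * π y + β * (y * π y)) + γ * (y ^ 2 * π y))
      (Set.Icc 0 1) := i01.add i2
    rw [integral_sub i012 (Integrable.const_mul (hiK s) 2),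
      integral_add i01 i2, integral_add i0 i1]
    simp only [integral_const_mul, hone, mul_one, hm1, hm2]
  have hC' := (ae_restrict_iff' measurableSet_Icc).1 hC
  have H1 : ∀ᵐ s, s ∈ Set.Ioo (0:ℝ) (1/2) → f s = 1 := by
    refine aux_local f hf hg _ isOpen_Ioo (1/2 - m1) (1/8 - m1/2 + m2/2 - C/2) ?_
    have := (quasiMeasurePreserving_add_right (volume : Measure ℝ) (1/2)).ae hC'
    filter_upwards [this] with s h hs
    obtain ⟨h0, h1⟩ := hs
    have h := h ⟨by linarith, by linarith⟩
    rw [← hK s ⟨h0, by linarith⟩]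
    have e := hexp ((s + 1/2)^2) (-2 * (s+1/2)) 1 s
    rw [← setIntegral_congr_fun (f := fun y => rhoT (s + 1/2) y ^ 2 * π y) measurableSet_Icc, h] at e
    · linarith
    · intro y hy
      obtain ⟨y0, y1⟩ := hy
      by_cases hys : y ≤ s
      · have : rhoT (s + 1/2) y = 1 - (s + 1/2 - y) := by
          rw [rhoT, abs_of_nonneg (by linarith), min_eq_right (by linarith)]
        simp only [this, Set.indicator, Set.mem_Iic, hys, if_true]; ring
      · have : rhoT (s + 1/2) y = |s + 1/2 - y| := by
          have : |s + 1/2 - y| ≤ 1/2 := abs_le.2 ⟨by linarith, by linarith⟩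
          rw [rhoT, min_eq_left (by linarith)]
        simp only [this, Set.indicator, Set.mem_Iic, hys, if_false, sq_abs]; ring
  have H2 : ∀ᵐ s, s ∈ Set.Ioo (1/2:ℝ) 1 → f s = 1 := by
    refine aux_local f hf hg _ isOpen_Ioo (1/2 - m1) (1/8 - m1/2 + m2/2 - C/2) ?_
    have := (quasiMeasurePreserving_add_right (volume : Measure ℝ) (-(1/2))).ae hC'
    filter_upwards [this] with s h hs
    obtain ⟨h0, h1⟩ := hs
    have h := h ⟨by linarith, by linarith⟩
    rw [← hK s ⟨by linarith, h1⟩]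
    have e := hexp ((s + -(1/2))^2 + 2 * s) (-2 * (s + -(1/2)) - 2) 1 s
    rw [← setIntegral_congr_fun (f := fun y => rhoT (s + -(1/2)) y ^ 2 * π y) measurableSet_Icc, h] at e
    · linarith
    · intro y hy
      obtain ⟨y0, y1⟩ := hy
      by_cases hys : y ≤ s
      · have : rhoT (s + -(1/2)) y = |s + -(1/2) - y| := by
          have : |s + -(1/2) - y| ≤ 1/2 := abs_le.2 ⟨by linarith, by linarith⟩
          rw [rhoT, min_eq_left (by linarith)]
        simp only [this, Set.indicator, Set.mem_Iic, hys, if_true, sq_abs]; ring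
      · have : rhoT (s + -(1/2)) y = 1 + (s + -(1/2) - y) := by
          rw [rhoT, abs_of_nonpos (by linarith), min_eq_right (by linarith)]; ring
        simp only [this, Set.indicator, Set.mem_Iic, hys, if_false]; ring
  refine (ae_restrict_iff' measurableSet_Icc).2 ?_
  have n (c : ℝ) : ∀ᵐ x : ℝ, x ≠ c := by simp [ae_iff, measure_singleton]
  filter_upwards [H1, H2, n 0, n (1/2), n 1] with x a1 a2 n0 nh n1 hx
  have hfx : f x = π x := Set.indicator_of_mem hx π
  rw [← hfx]
  rcases lt_or_gt_of_ne nh with hlt | hlt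
  · exact a1 ⟨lt_of_le_of_ne hx.1 (Ne.symm n0), hlt⟩
  · exact a2 ⟨hlt, lt_of_le_of_ne hx.2 n1⟩
end

section
/- For every nonzero integer ξ, ∫₀¹ min(x, 1−x)² e^{−2πiξx} dx = (−1)^ξ / (2π²ξ²), and ∫₀¹ min(x, 1−x)² dx = 1/12. -/
open MeasureTheory Complex

lemma aux_int (c s : ℂ) (hc : c ≠ 0) (a b : ℝ) :
    ∫ x in a..b, ((x : ℂ) - s) ^ 2 * Complex.exp (c * x) =
      (((b : ℂ) - s) ^ 2 / c - 2 * (b - s) / c ^ 2 + 2 / c ^ 3) * Complex.exp (c * b) -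
      (((a : ℂ) - s) ^ 2 / c - 2 * (a - s) / c ^ 2 + 2 / c ^ 3) * Complex.exp (c * a) := by
  apply intervalIntegral.integral_eq_sub_of_hasDerivAt
    (f := fun x : ℝ => (((x : ℂ) - s) ^ 2 / c - 2 * (x - s) / c ^ 2 + 2 / c ^ 3) *
      Complex.exp (c * x))
  · intro x _
    have h0 : HasDerivAt (fun x : ℝ => (x : ℂ)) 1 x := Complex.ofRealCLM.hasDerivAt
    have h1 := h0.sub_const s
    have h2 := ((((h1.pow 2).div_const c).sub ((h1.const_mul 2).div_const (c ^ 2))).add_const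
      (2 / c ^ 3)).mul ((h0.const_mul c).cexp)
    refine HasDerivAt.congr_deriv h2 ?_
    simp
    field_simp
    ring
  · apply Continuous.intervalIntegrable
    fun_prop

lemma exp_half (ξ : ℤ) :
    Complex.exp (-2 * (Real.pi : ℂ) * Complex.I * (ξ : ℂ) * (1 / 2)) = (-1 : ℂ) ^ ξ := by
  have : -2 * (Real.pi : ℂ) * Complex.I * (ξ : ℂ) * (1 / 2)
      = (ξ : ℂ) * (-(Real.pi * Complex.I)) := by ring
  rw [this, Complex.exp_int_mul, Complex.exp_neg, Complex.exp_pi_mul_I]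
  norm_num

/-- The Fourier modes on the torus of the squared torus distance to the origin,
`x ↦ min(x, 1−x)²` on `[0,1]`: the `ξ`-th mode is `(−1)^ξ/(2π²ξ²)` for `ξ ≠ 0`,
and the zeroth mode is `1/12`. -/
theorem stmt_10 :
    (∀ ξ : ℤ, ξ ≠ 0 →
      (∫ x in (0:ℝ)..1,
          ((min x (1 - x) : ℝ) ^ 2 : ℂ) *
            Complex.exp (-2 * (Real.pi : ℂ) * Complex.I * (ξ : ℂ) * (x : ℂ)))
        = ((-1 : ℂ) ^ ξ) / (2 * (Real.pi : ℂ) ^ 2 * (ξ : ℂ) ^ 2)) ∧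
    (∫ x in (0:ℝ)..1, (min x (1 - x)) ^ 2 = (1:ℝ)/12) := by
  constructor
  · intro ξ hξ
    have hpi : (Real.pi : ℂ) ≠ 0 := by exact_mod_cast Real.pi_ne_zero
    have hx : (ξ : ℂ) ≠ 0 := by exact_mod_cast hξ
    have hE := exp_half ξ
    have hE1 : Complex.exp (-2 * (Real.pi : ℂ) * Complex.I * (ξ : ℂ)) = 1 := by
      rw [Complex.exp_eq_one_iff]
      exact ⟨-ξ, by push_cast; ring⟩
    have hc2 : (-2 * (Real.pi : ℂ) * Complex.I * (ξ : ℂ)) ^ 2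
        = -4 * (Real.pi : ℂ) ^ 2 * (ξ : ℂ) ^ 2 := by
      linear_combination (4 * (Real.pi : ℂ) ^ 2 * (ξ : ℂ) ^ 2) * Complex.I_sq
    have hc : -2 * (Real.pi : ℂ) * Complex.I * (ξ : ℂ) ≠ 0 := by
      simp [hpi, hx]
    generalize -2 * (Real.pi : ℂ) * Complex.I * (ξ : ℂ) = c at *
    have hcont : Continuous fun x : ℝ => ((min x (1 - x) : ℝ) ^ 2 : ℂ) * Complex.exp (c * x) := by
      fun_prop
    rw [← intervalIntegral.integral_add_adjacent_intervals (b := 1 / 2)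
      (hcont.intervalIntegrable _ _) (hcont.intervalIntegrable _ _)]
    have e1 : ∫ x in (0:ℝ)..(1 / 2), ((min x (1 - x) : ℝ) ^ 2 : ℂ) * Complex.exp (c * x)
        = ∫ x in (0:ℝ)..(1 / 2), ((x : ℂ) - 0) ^ 2 * Complex.exp (c * x) := by
      apply intervalIntegral.integral_congr
      intro x hx
      rw [Set.uIcc_of_le (by norm_num)] at hx
      simp only
      rw [min_eq_left (by linarith [hx.2]), sub_zero]
    have e2 : ∫ x in (1 / 2 : ℝ)..1, ((min x (1 - x) : ℝ) ^ 2 : ℂ) * Complex.exp (c * x)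
        = ∫ x in (1 / 2 : ℝ)..1, ((x : ℂ) - 1) ^ 2 * Complex.exp (c * x) := by
      apply intervalIntegral.integral_congr
      intro x hx
      rw [Set.uIcc_of_le (by norm_num)] at hx
      simp only
      rw [min_eq_right (by linarith [hx.1])]
      push_cast
      ring
    rw [e1, e2, aux_int c 0 hc, aux_int c 1 hc]
    have h : (((1 / 2 : ℝ)) : ℂ) = 1 / 2 := by push_cast; rfl
    rw [h, hE]
    simp only [Complex.ofReal_one, Complex.ofReal_zero, mul_one, mul_zero, hE1, Complex.exp_zero]
    have : (-1 : ℂ) ^ ξ / (2 * (Real.pi : ℂ) ^ 2 * (ξ : ℂ) ^ 2) = -2 * (-1 : ℂ) ^ ξ / c ^ 2 := by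
      rw [hc2]
      field_simp
      norm_num
    rw [this]
    generalize (-1 : ℂ) ^ ξ = E
    field_simp
    ring
  · have hcont : Continuous fun x : ℝ => (min x (1 - x)) ^ 2 := by fun_prop
    rw [← intervalIntegral.integral_add_adjacent_intervals (b := 1 / 2)
      (hcont.intervalIntegrable _ _) (hcont.intervalIntegrable _ _)]
    have e1 : ∫ x in (0:ℝ)..(1 / 2), (min x (1 - x)) ^ 2 = ∫ x in (0:ℝ)..(1 / 2), x ^ 2 := by
      apply intervalIntegral.integral_congr
      intro x hx
      rw [Set.uIcc_of_le (by norm_num)] at hx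
      simp only
      rw [min_eq_left (by linarith [hx.2])]
    have e2 : ∫ x in (1 / 2 : ℝ)..1, (min x (1 - x)) ^ 2
        = ∫ x in (1 / 2 : ℝ)..1, (fun y : ℝ => y ^ 2) (1 - x) := by
      apply intervalIntegral.integral_congr
      intro x hx
      rw [Set.uIcc_of_le (by norm_num)] at hx
      simp only
      rw [min_eq_right (by linarith [hx.1])]
    rw [e1, e2, intervalIntegral.integral_comp_sub_left (fun y : ℝ => y ^ 2) 1]
    simp only [integral_pow]
    norm_num
end

section
/- Let π be a probability density on [0,1], let X, Y, Z be i.i.d. random variables with density π, let ρ_T(x,y) = min(|x−y|, 1−|x−y|), and let μ_T = E[ρ_T(X,Y)²]. Then E[(ρ_T(X,Y)² − μ_T)(ρ_T(X,Z)² − μ_T)] = Var(E[ρ_T(X,Y)² | X]) ≥ 0, and this quantity equals 0 if and only if π(x) = 1 for almost every x ∈ [0,1]. Consequently, adjacent squared torus distances of i.i.d. points with density π are uncorrelated if and only if π is uniform. -/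
open MeasureTheory

open Set Filter Topology

lemma aux_ae_zero (f f' : ℝ → ℝ) (c : ℝ) (s : Set ℝ) (hs : ∀ x ∈ s, f x = c)
    (hf : ∀ᵐ x, HasDerivAt f (f' x) x) : ∀ᵐ x, x ∈ s → f' x = 0 := by
  have hc := (countable_setOfPred_isolated_right_within (s := s)).ae_notMem volume
  filter_upwards [hf, hc] with x hx hxc hxs
  have hne : (𝓝[s ∩ Ioi x] x).NeBot := by
    rw [neBot_iff]
    intro h
    exact hxc ⟨hxs, h⟩
  have hu : UniqueDiffWithinAt ℝ s x := by
    rw [uniqueDiffWithinAt_iff_accPt, accPt_principal_iff_nhdsWithin]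
    refine hne.mono (nhdsWithin_mono _ ?_)
    rintro y ⟨hy, hy'⟩
    exact ⟨hy, ne_of_gt hy'⟩
  have h1 : HasDerivWithinAt f 0 s x :=
    (hasDerivWithinAt_const x s c).congr hs (hs x hxs)
  exact hu.eq_deriv _ hx.hasDerivWithinAt h1

lemma rho_sq (x y : ℝ) : rhoT x y ^ 2 =
    (x - y) ^ 2 - 2 * max (x - 1/2 - y) 0 - 2 * max (x + 1/2 - y) 0 + 2 * (x + 1/2 - y) := by
  unfold rhoT
  rcases le_total (x - y) 0 with h | h
  · rw [abs_of_nonpos h, max_eq_right (by linarith : x - 1/2 - y ≤ 0)]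
    rcases le_total (x - y) (-(1/2)) with h1 | h1
    · rw [min_eq_right (by linarith), max_eq_right (by linarith)]; ring
    · rw [min_eq_left (by linarith), max_eq_left (by linarith)]; ring
  · rw [abs_of_nonneg h, max_eq_left (by linarith : 0 ≤ x + 1/2 - y)]
    rcases le_total (x - y) (1/2) with h1 | h1
    · rw [min_eq_left (by linarith), max_eq_right (by linarith)]; ring
    · rw [min_eq_right (by linarith), max_eq_left (by linarith)]; ring

lemma P_deriv (π : ℝ → ℝ) (hint : IntegrableOn π (Icc 0 1)) (u : ℝ) :
    HasDerivAt (fun u => ∫ y in Icc (0:ℝ) 1, max (u - y) 0 * π y)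
      (∫ y in Iic u, (Icc (0:ℝ) 1).indicator π y) u := by
  have key := hasDerivAt_integral_of_dominated_loc_of_lip (μ := volume.restrict (Icc (0:ℝ) 1))
    (F := fun u y => max (u - y) 0 * π y) (F' := fun y => (Iic u).indicator π y) (x₀ := u)
    (s := univ) (bound := fun y => |π y|) univ_mem
    (Eventually.of_forall fun v => by
      apply AEStronglyMeasurable.mul _ hint.1
      exact Continuous.aestronglyMeasurable (by fun_prop))
    (by 
      apply IntegrableOn.continuousOn_mul _ hint isCompact_Icc
      exact Continuous.continuousOn (by fun_prop))
    (hint.1.indicator measurableSet_Iic)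
    (Eventually.of_forall fun y => by
      rw [LipschitzOnWith]
      apply LipschitzWith.lipschitzOnWith
      apply LipschitzWith.of_dist_le_mul
      intro a b
      rw [Real.dist_eq, Real.dist_eq, ← sub_mul, abs_mul]
      simp only [Real.coe_nnabs, abs_abs]
      rw [mul_comm]
      refine mul_le_mul_of_nonneg_left ?_ (abs_nonneg _)
      have := abs_max_sub_max_le_abs (a - y) (b - y) 0
      rwa [sub_sub_sub_cancel_right] at this)
    hint.abs
    (by
      have : ∀ᵐ y ∂(volume.restrict (Icc (0:ℝ) 1)), y ≠ u :=
        ae_restrict_of_ae (by simp [ae_iff])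
      filter_upwards [this] with y hy
      rcases lt_or_gt_of_ne hy with h | h
      · have h1 : HasDerivAt (fun v => (v - y) * π y) (1 * π y) u :=
          ((hasDerivAt_id u).sub_const y).mul_const _
        rw [indicator_of_mem (show y ∈ Iic u from h.le)]
        rw [one_mul] at h1
        refine h1.congr_of_eventuallyEq ?_
        filter_upwards [Ioi_mem_nhds h] with v hv
        rw [max_eq_left (sub_nonneg.2 (le_of_lt hv))]
      · rw [indicator_of_notMem (show y ∉ Iic u from not_le.2 h)]
        refine (hasDerivAt_const u (0:ℝ)).congr_of_eventuallyEq ?_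
        filter_upwards [Iio_mem_nhds h] with v hv
        rw [max_eq_right (sub_nonpos.2 (le_of_lt hv)), zero_mul])
  have e : (∫ y in Iic u, (Icc (0:ℝ) 1).indicator π y)
      = ∫ y in Icc (0:ℝ) 1, (Iic u).indicator π y := by
    rw [setIntegral_indicator measurableSet_Iic, setIntegral_indicator measurableSet_Icc, inter_comm]
  rw [e]
  exact key.2

lemma F_deriv (w : ℝ → ℝ) (hw : Integrable w) :
    ∀ᵐ u, HasDerivAt (fun u => ∫ y in Iic u, w y) (w u) u := by
  filter_upwards [LocallyIntegrable.ae_hasDerivAt_integral hw.locallyIntegrable] with u hu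
  have h := (hu 0).const_add (∫ y in Iic (0:ℝ), w y)
  refine h.congr_of_eventuallyEq (Eventually.of_forall fun v => ?_)
  simp only
  rw [← intervalIntegral.integral_Iic_sub_Iic hw.integrableOn hw.integrableOn]
  ring

lemma g_formula (π : ℝ → ℝ) (hint : IntegrableOn π (Icc 0 1))
    (hone : ∫ x in Icc (0:ℝ) 1, π x = 1) : ∃ m c : ℝ, ∀ x,
    (∫ y in Icc (0:ℝ) 1, rhoT x y ^ 2 * π y) = x^2 + 2 * x - 2 * m * x + c
      - 2 * (∫ y in Icc (0:ℝ) 1, max (x - 1/2 - y) 0 * π y)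
      - 2 * (∫ y in Icc (0:ℝ) 1, max (x + 1/2 - y) 0 * π y) := by
  have hi : ∀ f : ℝ → ℝ, Continuous f → IntegrableOn (fun y => f y * π y) (Icc 0 1) :=
    fun f hf => hint.continuousOn_mul hf.continuousOn isCompact_Icc
  refine ⟨∫ y in Icc (0:ℝ) 1, y * π y, 
    ∫ y in Icc (0:ℝ) 1, (y^2 - 2 * y + 1) * π y, fun x => ?_⟩
  have e : ∀ y, rhoT x y ^ 2 * π y = (x^2 + 2 * x) * π y - 2 * x * (y * π y)
     + (y^2 - 2 * y + 1) * π y - 2 * (max (x - 1/2 - y) 0 * π y) - 2 * (max (x + 1/2 - y) 0 * π y) := by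
    intro y; rw [rho_sq]; ring
  simp_rw [e]
  have i1 : IntegrableOn (fun y => (x^2 + 2 * x) * π y) (Icc 0 1) := hint.const_mul _
  have i2 : IntegrableOn (fun y => 2 * x * (y * π y)) (Icc 0 1) := (hi (fun y => y) (by fun_prop)).const_mul _
  have i3 := hi (fun y => (y^2 - 2 * y + 1)) (by fun_prop)
  have i4 : IntegrableOn (fun y => 2 * (max (x - 1/2 - y) 0 * π y)) (Icc 0 1) := (hi (fun y => max (x - 1/2 - y) 0) (by fun_prop)).const_mul _
  have i5 : IntegrableOn (fun y => 2 * (max (x + 1/2 - y) 0 * π y)) (Icc 0 1) := (hi (fun y => max (x + 1/2 - y) 0) (by fun_prop)).const_mul _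
  have j1 : IntegrableOn (fun y => (x^2 + 2 * x) * π y - 2 * x * (y * π y)) (Icc 0 1) := i1.sub i2
  have j2 : IntegrableOn (fun y => (x^2 + 2 * x) * π y - 2 * x * (y * π y)
      + (y^2 - 2 * y + 1) * π y) (Icc 0 1) := j1.add i3
  have j3 : IntegrableOn (fun y => (x^2 + 2 * x) * π y - 2 * x * (y * π y)
      + (y^2 - 2 * y + 1) * π y - 2 * (max (x - 1/2 - y) 0 * π y)) (Icc 0 1) := j2.sub i4
  rw [integral_sub j3 i5, integral_sub j2 i4, integral_add j1 i3, integral_sub i1 i2]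
  simp only [integral_const_mul, hone]
  ring

lemma g_deriv (π : ℝ → ℝ) (hint : IntegrableOn π (Icc 0 1))
    (hone : ∫ x in Icc (0:ℝ) 1, π x = 1) : ∃ m : ℝ, ∀ x,
    HasDerivAt (fun x => ∫ y in Icc (0:ℝ) 1, rhoT x y ^ 2 * π y)
      (2 * x + 2 - 2 * m - 2 * (∫ y in Iic (x - 1/2), (Icc (0:ℝ) 1).indicator π y)
        - 2 * (∫ y in Iic (x + 1/2), (Icc (0:ℝ) 1).indicator π y)) x := by
  obtain ⟨m, c, h⟩ := g_formula π hint hone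
  refine ⟨m, fun x => ?_⟩
  rw [funext h]
  have h1 := (P_deriv π hint (x - 1/2)).comp_sub_const x (1/2)
  have h2 := (P_deriv π hint (x + 1/2)).comp_add_const x (1/2)
  have h3 : HasDerivAt (fun x : ℝ => x^2 + 2 * x - 2 * m * x + c) (2 * x + 2 - 2 * m) x := by
    have := ((((hasDerivAt_id x).pow 2).add ((hasDerivAt_id x).const_mul 2)).sub ((hasDerivAt_id x).const_mul (2*m))).add_const c
    refine HasDerivAt.congr_deriv this ?_
    simp
  exact (h3.sub (h1.const_mul 2)).sub (h2.const_mul 2)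

lemma unif (x : ℝ) (hx : x ∈ Icc (0:ℝ) 1) : ∫ y in Icc (0:ℝ) 1, rhoT x y ^ 2 = 1/12 := by
  have hc : Continuous (fun y => rhoT x y ^ 2) := by unfold rhoT; fun_prop
  have hii : ∀ a b : ℝ, IntervalIntegrable (fun y => rhoT x y ^ 2) volume a b :=
    fun a b => hc.intervalIntegrable a b
  have sq : ∀ a b c : ℝ, ∫ y in a..b, (y - c) ^ 2 = ((b - c) ^ 3 - (a - c) ^ 3) / 3 := by
    intro a b c
    rw [intervalIntegral.integral_comp_sub_right (fun y => y ^ 2) c, integral_pow]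
    norm_num
  rw [integral_Icc_eq_integral_Ioc, ← intervalIntegral.integral_of_le zero_le_one]
  obtain ⟨hx0, hx1⟩ := hx
  rcases le_total x (1/2) with h | h
  · rw [← intervalIntegral.integral_add_adjacent_intervals (hii 0 (x + 1/2)) (hii (x + 1/2) 1)]
    have h1 : ∫ y in (0:ℝ)..(x + 1/2), rhoT x y ^ 2 = ∫ y in (0:ℝ)..(x + 1/2), (y - x) ^ 2 := by
      apply intervalIntegral.integral_congr
      intro y hy
      rw [uIcc_of_le (by linarith)] at hy
      simp only [rho_sq]
      rw [max_eq_right (by linarith [hy.1] : x - 1/2 - y ≤ 0),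
        max_eq_left (by linarith [hy.2] : 0 ≤ x + 1/2 - y)]
      ring
    have h2 : ∫ y in (x + 1/2)..1, rhoT x y ^ 2 = ∫ y in (x + 1/2)..1, (y - (x + 1)) ^ 2 := by
      apply intervalIntegral.integral_congr
      intro y hy
      rw [uIcc_of_le (by linarith)] at hy
      simp only [rho_sq]
      rw [max_eq_right (by linarith [hy.1] : x - 1/2 - y ≤ 0),
        max_eq_right (by linarith [hy.1] : x + 1/2 - y ≤ 0)]
      ring
    rw [h1, h2, sq, sq]
    ring
  · rw [← intervalIntegral.integral_add_adjacent_intervals (hii 0 (x - 1/2)) (hii (x - 1/2) 1)]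
    have h1 : ∫ y in (0:ℝ)..(x - 1/2), rhoT x y ^ 2 = ∫ y in (0:ℝ)..(x - 1/2), (y - (x - 1)) ^ 2 := by
      apply intervalIntegral.integral_congr
      intro y hy
      rw [uIcc_of_le (by linarith)] at hy
      simp only [rho_sq]
      rw [max_eq_left (by linarith [hy.2] : 0 ≤ x - 1/2 - y),
        max_eq_left (by linarith [hy.2] : 0 ≤ x + 1/2 - y)]
      ring
    have h2 : ∫ y in (x - 1/2)..1, rhoT x y ^ 2 = ∫ y in (x - 1/2)..1, (y - x) ^ 2 := by
      apply intervalIntegral.integral_congr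
      intro y hy
      rw [uIcc_of_le (by linarith)] at hy
      simp only [rho_sq]
      rw [max_eq_right (by linarith [hy.1] : x - 1/2 - y ≤ 0),
        max_eq_left (by linarith [hy.2] : 0 ≤ x + 1/2 - y)]
      ring
    rw [h1, h2, sq, sq]
    ring

lemma forward (π : ℝ → ℝ) 
    (hone : ∫ x in Icc (0:ℝ) 1, π x = 1) (hint : IntegrableOn π (Icc 0 1)) (μT : ℝ)
    (h : ∀ᵐ x ∂(volume.restrict (Icc (0:ℝ) 1)), 
      ((∫ y in Icc (0:ℝ) 1, rhoT x y ^ 2 * π y) - μT) ^ 2 * π x = 0) :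
    ∀ᵐ x ∂(volume.restrict (Icc (0:ℝ) 1)), π x = 1 := by
  obtain ⟨m, hg⟩ := g_deriv π hint hone
  set w := (Icc (0:ℝ) 1).indicator π with hw
  have hwi : Integrable w := (integrable_indicator_iff measurableSet_Icc).2 hint
  have h1 := aux_ae_zero _ _ μT {x | (∫ y in Icc (0:ℝ) 1, rhoT x y ^ 2 * π y) = μT}
    (fun x hx => hx) (Eventually.of_forall hg)
  have hF := F_deriv w hwi
  have tr : ∀ (p : ℝ → Prop) (a : ℝ), (∀ᵐ x, p x) → ∀ᵐ x, p (x + a) := fun p a hp =>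
    (measurePreserving_add_right volume a).quasiMeasurePreserving.ae hp
  have h2 := aux_ae_zero (fun x => 2 * x + 2 - 2 * m - 2 * (∫ y in Iic (x - 1/2), w y)
        - 2 * (∫ y in Iic (x + 1/2), w y)) (fun x => 2 - 2 * w (x - 1/2) - 2 * w (x + 1/2)) 0
    {x | 2 * x + 2 - 2 * m - 2 * (∫ y in Iic (x - 1/2), w y)
        - 2 * (∫ y in Iic (x + 1/2), w y) = 0} (fun x hx => hx) (by
      filter_upwards [tr _ (-(1/2)) hF, tr _ (1/2) hF] with x ha hb
      rw [← sub_eq_add_neg] at ha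
      have h1 := ha.comp_sub_const x (1/2)
      have h2 := hb.comp_add_const x (1/2)
      have h3 : HasDerivAt (fun x : ℝ => 2 * x + 2 - 2 * m) 2 x := by
        simpa using (((hasDerivAt_id x).const_mul 2).add_const 2).sub_const (2*m)
      exact (h3.sub (h1.const_mul 2)).sub (h2.const_mul 2))
  have h' := (ae_restrict_iff' measurableSet_Icc).1 h
  have star : ∀ᵐ x, w x ≠ 0 → w (x - 1/2) + w (x + 1/2) = 1 := by
    filter_upwards [h1, h2, h'] with x a b c d
    have hx : x ∈ Icc (0:ℝ) 1 := by
      by_contra hx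
      exact d (indicator_of_notMem hx _)
    have hπ : w x = π x := indicator_of_mem hx _
    rw [hπ] at d
    have e := (mul_eq_zero.1 (c hx)).resolve_right d
    have := b (a (sub_eq_zero.1 (pow_eq_zero_iff (two_ne_zero) |>.1 e)))
    linarith
  have le1 : ∀ᵐ x, x ∈ Icc (0:ℝ) 1 → 0 ≤ 1 - π x := by
    have hn : ∀ a : ℝ, ∀ᵐ x : ℝ, x ≠ a := fun a => by simp [ae_iff]
    filter_upwards [star, tr _ (1/2) star, tr _ (-(1/2)) star, hn 0, hn (1/2), hn 1] with x a b c n0 n1 n2 hx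
    have hπ : w x = π x := indicator_of_mem hx _
    rw [← hπ]
    have x0 : 0 < x := lt_of_le_of_ne hx.1 n0.symm
    have x1 : x < 1 := lt_of_le_of_ne hx.2 n2
    have out1 : ∀ t, t < 0 → w t = 0 := fun t ht => indicator_of_notMem (fun h => by linarith [h.1]) _
    have out2 : ∀ t, 1 < t → w t = 0 := fun t ht => indicator_of_notMem (fun h => by linarith [h.2]) _
    by_cases hz : w x = 0
    · rw [hz]; norm_num
    have a' := a hz
    rcases lt_or_gt_of_ne n1 with l | l
    · rw [out1 (x - 1/2) (by linarith), zero_add] at a'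
      have := b (by rw [a']; norm_num)
      rw [out2 (x + 1/2 + 1/2) (by linarith), add_sub_cancel_right] at this
      linarith
    · rw [out2 (x + 1/2) (by linarith), add_zero] at a'
      rw [← sub_eq_add_neg] at c
      have := c (by rw [a']; norm_num)
      rw [out1 (x - 1/2 - 1/2) (by linarith), sub_add_cancel] at this
      linarith
  have hz : ∫ x in Icc (0:ℝ) 1, (1 - π x) = 0 := by
    rw [integral_sub (by simp) hint, hone]; simp
  have i : IntegrableOn (fun x => 1 - π x) (Icc 0 1) := Integrable.sub (by simp) hint
  have := (integral_eq_zero_iff_of_nonneg_ae ((ae_restrict_iff' measurableSet_Icc).2 le1) i).1 hz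
  filter_upwards [this] with x hx
  simp at hx
  linarith
/-- For `X, Y, Z` i.i.d. on `[0,1]` with density `π` and `μ_T = E[ρ_T(X,Y)²]`, the
covariance of adjacent squared torus distances equals the variance of the conditional
expectation `E[ρ_T(X,Y)² | X]`, is nonnegative, and vanishes iff `π` is uniform. -/
theorem stmt_11 (π : ℝ → ℝ) (hmeas : Measurable π)
    (hnonneg : ∀ x ∈ Set.Icc (0:ℝ) 1, 0 ≤ π x)
    (hone : ∫ x in Set.Icc (0:ℝ) 1, π x = 1)
    (μT : ℝ)
    (hμT : μT = ∫ x in Set.Icc (0:ℝ) 1, ∫ y in Set.Icc (0:ℝ) 1,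
      rhoT x y ^ 2 * (π x * π y)) :
    let cov : ℝ := ∫ x in Set.Icc (0:ℝ) 1, ∫ y in Set.Icc (0:ℝ) 1, ∫ z in Set.Icc (0:ℝ) 1,
      ((rhoT x y ^ 2 - μT) * (rhoT x z ^ 2 - μT)) * (π x * π y * π z)
    let condVar : ℝ := ∫ x in Set.Icc (0:ℝ) 1,
      ((∫ y in Set.Icc (0:ℝ) 1, rhoT x y ^ 2 * π y) - μT) ^ 2 * π x
    cov = condVar ∧ 0 ≤ cov ∧
      (cov = 0 ↔ ∀ᵐ x ∂(volume.restrict (Set.Icc (0:ℝ) 1)), π x = 1) := by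
  intro cov condVar
  have hint : IntegrableOn π (Icc 0 1) := by
    by_contra h
    rw [integral_undef h] at hone
    norm_num at hone
  have hsc : ∀ x, Continuous (fun y => rhoT x y ^ 2) := fun x => by unfold rhoT; fun_prop
  have hi : ∀ x, IntegrableOn (fun y => rhoT x y ^ 2 * π y) (Icc 0 1) :=
    fun x => hint.continuousOn_mul (hsc x).continuousOn isCompact_Icc
  have hinner : ∀ x, ∫ y in Icc (0:ℝ) 1, (rhoT x y ^ 2 - μT) * π y =
      (∫ y in Icc (0:ℝ) 1, rhoT x y ^ 2 * π y) - μT := fun x => by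
    simp_rw [sub_mul]
    rw [integral_sub (hi x) (hint.const_mul _), integral_const_mul, hone, mul_one]
  have e1 : cov = condVar := by
    simp only [cov, condVar]
    congr 1
    ext x
    have : ∀ y z, ((rhoT x y ^ 2 - μT) * (rhoT x z ^ 2 - μT)) * (π x * π y * π z)
       = (π x * ((rhoT x y ^ 2 - μT) * π y)) * ((rhoT x z ^ 2 - μT) * π z) := fun y z => by ring
    simp_rw [this, integral_const_mul, integral_mul_const, integral_const_mul, hinner]
    ring
  have hnn : ∀ x ∈ Icc (0:ℝ) 1, 0 ≤ ((∫ y in Icc (0:ℝ) 1, rhoT x y ^ 2 * π y) - μT) ^ 2 * π x :=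
    fun x hx => mul_nonneg (sq_nonneg _) (hnonneg x hx)
  have e2 : 0 ≤ condVar := setIntegral_nonneg measurableSet_Icc hnn
  refine ⟨e1, e1 ▸ e2, ?_⟩
  rw [e1]
  constructor
  · intro h0
    obtain ⟨m, hg⟩ := g_deriv π hint hone
    have gc : Continuous (fun x => ∫ y in Icc (0:ℝ) 1, rhoT x y ^ 2 * π y) :=
      continuous_iff_continuousAt.2 fun x => (hg x).continuousAt
    have ii : IntegrableOn (fun x => ((∫ y in Icc (0:ℝ) 1, rhoT x y ^ 2 * π y) - μT) ^ 2 * π x)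
        (Icc 0 1) := hint.continuousOn_mul ((gc.sub continuous_const).pow 2).continuousOn isCompact_Icc
    apply forward π hone hint μT
    exact (integral_eq_zero_iff_of_nonneg_ae
      ((ae_restrict_iff' measurableSet_Icc).2 (Eventually.of_forall hnn)) ii).1 h0
  · intro h
    have g1 : ∀ x ∈ Icc (0:ℝ) 1, ∫ y in Icc (0:ℝ) 1, rhoT x y ^ 2 * π y = 1/12 := by
      intro x hx
      rw [← unif x hx]
      apply integral_congr_ae
      filter_upwards [h] with y hy
      rw [hy, mul_one]
    have hm : μT = 1/12 := by
      rw [hμT]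
      have : ∀ x y, rhoT x y ^ 2 * (π x * π y) = π x * (rhoT x y ^ 2 * π y) := fun x y => by ring
      simp_rw [this, integral_const_mul]
      rw [setIntegral_congr_fun (g := fun x => π x * (1/12)) measurableSet_Icc
        (fun x hx => by simp only [g1 x hx]), integral_mul_const, hone, one_mul]
    simp only [condVar]
    rw [setIntegral_congr_fun (g := fun x => 0) measurableSet_Icc
        (fun x hx => by simp only [g1 x hx, hm]; simp)]
    simp
end

section
/- Fix n ≥ 2. For each dimension d, let X₁, …, X_n be i.i.d. uniform random points in [0,1]^d, and for each pair i < j let τ_{ij}^{(d)} = (Σ_{k=1}^d min(|X_i^k − X_j^k|, 1−|X_i^k − X_j^k|)² − d/12)/√d. Then as d → ∞ the law of the random vector (τ_{ij}^{(d)})_{1 ≤ i < j ≤ n} ∈ ℝ^{n(n−1)/2} converges weakly to the product of n(n−1)/2 independent centered Gaussian distributions each of variance 1/180. -/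
open MeasureTheory ProbabilityTheory Filter Topology

/-- The uniform probability measure on `[0,1]`. -/
noncomputable def unif01 : Measure ℝ := volume.restrict (Set.Icc (0:ℝ) 1)

/-- The law of `n` i.i.d. uniform random points in `[0,1]^d`. -/
noncomputable def cubeLaw (n d : ℕ) : Measure (Fin n → Fin d → ℝ) :=
  Measure.pi fun _ => Measure.pi fun _ => unif01

/-- Index type of (unordered) pairs `i < j` of nodes. -/
abbrev Pairs (n : ℕ) := {p : Fin n × Fin n // p.1 < p.2}

/-- The normalised squared torus distances
`τ_{ij} = (Σ_k min(|X_i^k−X_j^k|, 1−|X_i^k−X_j^k|)² − d/12)/√d`. -/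
noncomputable def torusTau (n d : ℕ) (ω : Fin n → Fin d → ℝ) (p : Pairs n) : ℝ :=
  ((∑ k : Fin d,
      (min |ω p.1.1 k - ω p.1.2 k| (1 - |ω p.1.1 k - ω p.1.2 k|)) ^ 2) - d / 12)
    / Real.sqrt d


noncomputable def hh (a b : ℝ) : ℝ := (min |a - b| (1 - |a - b|)) ^ 2 - 1 / 12

lemma hh_comm (a b : ℝ) : hh a b = hh b a := by
  unfold hh; rw [abs_sub_comm]

@[fun_prop]
lemma hh_continuous : Continuous (fun x : ℝ × ℝ => hh x.1 x.2) := by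
  unfold hh; fun_prop

instance unif01_prob : IsProbabilityMeasure unif01 := by
  constructor; simp [unif01]

lemma unif01_ae : ∀ᵐ x ∂unif01, x ∈ Set.Icc (0:ℝ) 1 :=
  ae_restrict_mem measurableSet_Icc

lemma pi_unif_ae (n : ℕ) : ∀ᵐ x ∂(Measure.pi fun _ : Fin n => unif01), ∀ j, x j ∈ Set.Icc (0:ℝ) 1 :=
  eventually_all.2 fun _ => Measure.tendsto_eval_ae_ae.eventually unif01_ae

lemma hh_bound {a b : ℝ} (ha : a ∈ Set.Icc (0:ℝ) 1) (hb : b ∈ Set.Icc (0:ℝ) 1) : |hh a b| ≤ 2 := by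
  obtain ⟨a0, a1⟩ := ha
  obtain ⟨b0, b1⟩ := hb
  have h1 : |a - b| ≤ 1 := abs_le.2 ⟨by linarith, by linarith⟩
  have h0 := abs_nonneg (a - b)
  have hm0 : 0 ≤ min |a - b| (1 - |a - b|) := le_min h0 (by linarith)
  have hm1 : min |a - b| (1 - |a - b|) ≤ 1 := (min_le_left _ _).trans h1
  unfold hh
  rw [abs_le]
  constructor <;> nlinarith

lemma tor_eq_round {v : ℝ} (hv : |v| ≤ 1) : (min |v| (1 - |v|)) ^ 2 = (v - round v) ^ 2 := by
  rw [← sq_abs (v - round v), abs_sub_round_eq_min]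
  congr 1
  obtain ⟨h1, h2⟩ := abs_le.1 hv
  rcases eq_or_lt_of_le h2 with h | h
  · subst h; norm_num
  rcases le_or_gt 0 v with h0 | h0
  · rw [Int.fract_eq_self.2 ⟨h0, h⟩, abs_of_nonneg h0]
  · rcases eq_or_lt_of_le h1 with h' | h'
    · subst h'; norm_num
    have : Int.fract v = v + 1 := by
      rw [← Int.fract_add_one, Int.fract_eq_self.2 ⟨by linarith, by linarith⟩]
    rw [this, abs_of_neg h0, min_comm]
    congr 1 <;> ring

lemma int_unif (φ : ℝ → ℝ) {c : ℝ} (hc : c ∈ Set.Icc (0:ℝ) 1) :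
    ∫ u, φ (hh u c) ∂unif01 = ∫ u in (-(1/2) : ℝ)..(1/2), φ (u ^ 2 - 1/12) := by
  have hper : Function.Periodic (fun v : ℝ => φ ((v - round v) ^ 2 - 1/12)) 1 := by
    intro v; simp
  have e1 : ∫ u, φ (hh u c) ∂unif01 = ∫ u in (0:ℝ)..1, φ ((u - c - round (u - c)) ^ 2 - 1/12) := by
    rw [unif01, integral_Icc_eq_integral_Ioc, ← intervalIntegral.integral_of_le zero_le_one]
    refine intervalIntegral.integral_congr fun u hu => ?_
    rw [Set.uIcc_of_le zero_le_one] at hu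
    simp only [hh]
    rw [tor_eq_round (abs_le.2 ⟨by linarith [hu.1, hc.2], by linarith [hu.2, hc.1]⟩)]
  rw [e1, intervalIntegral.integral_comp_sub_right (fun v => φ ((v - round v) ^ 2 - 1/12)) c]
  have := hper.intervalIntegral_add_eq (0 - c) (-(1/2))
  rw [show (1:ℝ) - c = 0 - c + 1 by ring, this, show (-(1/2) + 1 : ℝ) = 1/2 by norm_num]
  rw [intervalIntegral.integral_of_le (by norm_num), intervalIntegral.integral_of_le (by norm_num),
    integral_Ioc_eq_integral_Ioo, integral_Ioc_eq_integral_Ioo]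
  refine setIntegral_congr_fun measurableSet_Ioo fun u hu => ?_
  have : round u = 0 := round_eq_zero_iff.2 ⟨hu.1.le, hu.2⟩
  simp [this]

lemma int_hh {c : ℝ} (hc : c ∈ Set.Icc (0:ℝ) 1) : ∫ u, hh u c ∂unif01 = 0 := by
  rw [int_unif (fun x => x) hc]
  rw [intervalIntegral.integral_sub (Continuous.intervalIntegrable (by fun_prop) _ _) (Continuous.intervalIntegrable (by fun_prop) _ _)]
  simp; norm_num

lemma int_hh_sq {c : ℝ} (hc : c ∈ Set.Icc (0:ℝ) 1) : ∫ u, hh u c * hh u c ∂unif01 = 1 / 180 := by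
  rw [int_unif (fun x => x * x) hc]
  have : ∀ u : ℝ, (u ^ 2 - 1/12) * (u ^ 2 - 1/12) = u ^ 4 - (1/6) * u ^ 2 + 1/144 := by
    intro u; ring
  simp_rw [this]
  rw [intervalIntegral.integral_add (Continuous.intervalIntegrable (by fun_prop) _ _) (Continuous.intervalIntegrable (by fun_prop) _ _),
    intervalIntegral.integral_sub (Continuous.intervalIntegrable (by fun_prop) _ _) (Continuous.intervalIntegrable (by fun_prop) _ _)]
  simp; norm_num

lemma int_pi_update {n : ℕ} (i : Fin n) (F : (Fin n → ℝ) → ℝ) (K : ℝ)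
    (hF : Integrable F (Measure.pi fun _ : Fin n => unif01))
    (h : ∀ x : Fin n → ℝ, (∀ j, x j ∈ Set.Icc (0:ℝ) 1) →
      ∫ u, F (Function.update x i u) ∂unif01 = K) :
    ∫ x, F x ∂(Measure.pi fun _ : Fin n => unif01) = K := by
  obtain _ | m := n
  · exact i.elim0
  have mp := (measurePreserving_piFinSuccAbove (fun _ : Fin (m+1) => unif01) i).symm
  rw [← mp.integral_comp' (g := F), integral_prod_symm]
  · have : ∀ᵐ y ∂(Measure.pi fun _ : Fin m => unif01),
        ∫ u, F ((MeasurableEquiv.piFinSuccAbove (fun _ => ℝ) i).symm (u, y)) ∂unif01 = K := by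
      filter_upwards [pi_unif_ae m] with y hy
      rw [← h (i.insertNth (0:ℝ) y)]
      · congr 1; ext u; congr 1
        simp [MeasurableEquiv.piFinSuccAbove, Fin.insertNthEquiv]
      · intro j
        refine Fin.succAboveCases i ?_ (fun j => ?_) j
        · simp
        · simpa using hy j
    rw [integral_congr_ae this]; simp
  · exact (mp.integrable_comp_emb (MeasurableEquiv.measurableEmbedding _)).2 hF

lemma hp_integrable {n : ℕ} (p : Pairs n) :
    Integrable (fun x : Fin n → ℝ => hh (x p.1.1) (x p.1.2)) (Measure.pi fun _ : Fin n => unif01) := by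
  refine Integrable.of_bound (Continuous.aestronglyMeasurable ?_) 2 ?_
  · exact hh_continuous.comp (by fun_prop : Continuous fun x : Fin n → ℝ => (x p.1.1, x p.1.2))
  · filter_upwards [pi_unif_ae n] with x hx
    exact hh_bound (hx _) (hx _)

lemma hpq_integrable {n : ℕ} (p q : Pairs n) :
    Integrable (fun x : Fin n → ℝ => hh (x p.1.1) (x p.1.2) * hh (x q.1.1) (x q.1.2))
      (Measure.pi fun _ : Fin n => unif01) := by
  refine Integrable.of_bound ((hp_integrable p).1.mul (hp_integrable q).1) (2 * 2) ?_
  · filter_upwards [pi_unif_ae n] with x hx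
    rw [norm_mul]
    exact mul_le_mul (hh_bound (hx _) (hx _)) (hh_bound (hx _) (hx _)) (norm_nonneg _) (by norm_num)

lemma int_hp {n : ℕ} (p : Pairs n) :
    ∫ x, hh (x p.1.1) (x p.1.2) ∂(Measure.pi fun _ : Fin n => unif01) = 0 := by
  refine int_pi_update p.1.1 _ _ (hp_integrable p) fun x hx => ?_
  have : p.1.2 ≠ p.1.1 := p.2.ne'
  simp [Function.update_of_ne this, int_hh (hx _)]

lemma int_hpp {n : ℕ} (p : Pairs n) :
    ∫ x, hh (x p.1.1) (x p.1.2) * hh (x p.1.1) (x p.1.2)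
      ∂(Measure.pi fun _ : Fin n => unif01) = 1 / 180 := by
  refine int_pi_update p.1.1 _ _ (hpq_integrable p p) fun x hx => ?_
  have : p.1.2 ≠ p.1.1 := p.2.ne'
  simpa [Function.update_of_ne this] using int_hh_sq (hx p.1.2)

lemma int_hpq {n : ℕ} (p q : Pairs n) (hpq : p ≠ q) :
    ∫ x, hh (x p.1.1) (x p.1.2) * hh (x q.1.1) (x q.1.2)
      ∂(Measure.pi fun _ : Fin n => unif01) = 0 := by
  obtain ⟨⟨a, b⟩, hab⟩ := p
  obtain ⟨⟨c, d⟩, hcd⟩ := q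
  have key : (c ≠ a ∧ d ≠ a) ∨ (c ≠ b ∧ d ≠ b) := by
    by_contra hcon
    apply hpq
    simp only [Subtype.mk.injEq, Prod.mk.injEq]
    simp only at hab hcd
    omega
  simp only at hab hcd
  rcases key with ⟨h1, h2⟩ | ⟨h1, h2⟩
  · refine int_pi_update a _ _ (hpq_integrable ⟨⟨a, b⟩, hab⟩ ⟨⟨c, d⟩, hcd⟩) fun x hx => ?_
    simp [Function.update_of_ne h1, Function.update_of_ne h2, Function.update_of_ne hab.ne',
      integral_mul_const, int_hh (hx _)]
  · refine int_pi_update b _ _ (hpq_integrable ⟨⟨a, b⟩, hab⟩ ⟨⟨c, d⟩, hcd⟩) fun x hx => ?_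
    simp only [Function.update_of_ne h1, Function.update_of_ne h2, Function.update_of_ne hab.ne,
      Function.update_self, integral_mul_const]
    simp_rw [hh_comm (x a)]
    simp [int_hh (hx _)]

lemma cubeLaw_swap (n d : ℕ) :
    (cubeLaw n d).map (fun ω k i => ω i k) =
      Measure.pi fun _ : Fin d => Measure.pi fun _ : Fin n => unif01 := by
  symm
  refine Measure.pi_eq_generateFrom (fun _ => generateFrom_pi) (fun _ => isPiSystem_pi)
    (fun _ => Measure.FiniteSpanningSetsIn.pi fun _ => unif01.toFiniteSpanningSetsIn) ?_
  intro s hs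
  choose r hr hrs using hs
  have hrm : ∀ k i, MeasurableSet (r k i) := fun k i => hr k i (Set.mem_univ _)
  obtain rfl : (fun k => Set.pi Set.univ (r k)) = s := funext hrs
  rw [Measure.map_apply (by fun_prop) (MeasurableSet.univ_pi fun k => MeasurableSet.univ_pi (hrm k))]
  have : (fun (ω : Fin n → Fin d → ℝ) k i => ω i k) ⁻¹' (Set.pi Set.univ fun k => Set.pi Set.univ (r k))
      = Set.pi Set.univ fun i => Set.pi Set.univ fun k => r k i := by
    ext ω; simp only [Set.mem_preimage, Set.mem_univ_pi]; exact forall_comm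
  rw [this, cubeLaw]
  simp only [Measure.pi_pi]
  exact Finset.prod_comm

noncomputable def YY {n : ℕ} (t : Pairs n → ℝ) (x : Fin n → ℝ) : ℝ :=
  ∑ p : Pairs n, t p * hh (x p.1.1) (x p.1.2)

lemma YY_continuous {n : ℕ} (t : Pairs n → ℝ) : Continuous (YY t) := by
  unfold YY
  refine continuous_finsetSum _ fun p _ => continuous_const.mul ?_
  exact hh_continuous.comp (by fun_prop : Continuous fun x : Fin n → ℝ => (x p.1.1, x p.1.2))

lemma int_YY {n : ℕ} (t : Pairs n → ℝ) :
    ∫ x, YY t x ∂(Measure.pi fun _ : Fin n => unif01) = 0 := by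
  unfold YY
  rw [integral_finsetSum _ fun p _ => (hp_integrable p).const_mul _]
  simp [integral_const_mul, int_hp]

lemma int_YY_sq {n : ℕ} (t : Pairs n → ℝ) :
    ∫ x, YY t x ^ 2 ∂(Measure.pi fun _ : Fin n => unif01) = (∑ p, t p ^ 2) / 180 := by
  have e : ∀ x : Fin n → ℝ, YY t x ^ 2 = ∑ p : Pairs n, ∑ q : Pairs n,
      (t p * t q) * (hh (x p.1.1) (x p.1.2) * hh (x q.1.1) (x q.1.2)) := by
    intro x
    rw [YY, sq, Finset.sum_mul_sum]
    refine Finset.sum_congr rfl fun p _ => Finset.sum_congr rfl fun q _ => by ring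
  simp_rw [e]
  rw [integral_finsetSum _ fun p _ => integrable_finsetSum _ fun q _ =>
    (hpq_integrable p q).const_mul _, Finset.sum_div]
  refine Finset.sum_congr rfl fun p _ => ?_
  rw [integral_finsetSum _ fun q _ => (hpq_integrable p q).const_mul _, Finset.sum_eq_single p]
  · rw [integral_const_mul, int_hpp]; ring
  · intro q _ hq
    rw [integral_const_mul, int_hpq p q hq.symm, mul_zero]
  · simp

lemma tau_eq (n d : ℕ) (ω : Fin n → Fin d → ℝ) (p : Pairs n) :
    torusTau n d ω p = (Real.sqrt d)⁻¹ * ∑ k, hh (ω p.1.1 k) (ω p.1.2 k) := by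
  unfold torusTau hh
  rw [Finset.sum_sub_distrib]
  simp
  ring

lemma tau_continuous (n d : ℕ) : Continuous (torusTau n d) := by
  unfold torusTau
  fun_prop

lemma charFun_tau (n d : ℕ) (t : EuclideanSpace ℝ (Pairs n)) :
    charFun ((cubeLaw n d).map (fun ω => WithLp.toLp 2 (torusTau n d ω))) t =
      (charFun ((Measure.pi fun _ : Fin n => unif01).map (YY t)) (Real.sqrt d)⁻¹) ^ d := by
  have hm : Measurable (fun ω => WithLp.toLp 2 (torusTau n d ω)) :=
    (by have := tau_continuous n d; fun_prop : Continuous _).measurable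
  rw [charFun_apply, integral_map hm.aemeasurable (by fun_prop), charFun_apply_real,
    integral_map (YY_continuous t).measurable.aemeasurable (by fun_prop)]
  have e : ∀ ω : Fin n → Fin d → ℝ, Complex.exp ((inner ℝ (WithLp.toLp 2 (torusTau n d ω)) t : ℝ) * Complex.I)
      = (fun x : Fin d → Fin n → ℝ => ∏ k, Complex.exp (((Real.sqrt d)⁻¹ : ℝ) * (YY t (x k) : ℝ) * Complex.I))
        ((fun ω k i => ω i k) ω) := by
    intro ω
    simp only
    rw [← Complex.exp_sum, ← Finset.sum_mul]
    congr 2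
    rw [← Finset.mul_sum]
    norm_cast
    simp only [PiLp.inner_apply, YY, tau_eq]
    rw [Finset.sum_comm, Finset.mul_sum]
    refine Finset.sum_congr rfl fun p _ => ?_
    simp [Finset.mul_sum]
    refine Finset.sum_congr rfl fun k _ => by ring
  simp_rw [e]
  have hY := YY_continuous t
  rw [← integral_map (μ := cubeLaw n d) (φ := fun ω k i => ω i k)
    (f := fun x : Fin d → Fin n → ℝ => ∏ k, Complex.exp (((Real.sqrt d)⁻¹ : ℝ) * (YY t (x k) : ℝ) * Complex.I))
    (Measurable.aemeasurable (by fun_prop)) (Continuous.aestronglyMeasurable (by fun_prop)),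
    cubeLaw_swap, integral_fintype_prod_eq_pow
      (fun x : Fin n → ℝ => Complex.exp (((Real.sqrt d)⁻¹ : ℝ) * (YY t x : ℝ) * Complex.I))]
  simp

lemma charFun_tendsto (n : ℕ) (t : EuclideanSpace ℝ (Pairs n)) :
    Tendsto (fun d : ℕ => charFun ((Measure.pi fun _ : Fin n => unif01).map (YY t)) (Real.sqrt d)⁻¹ ^ d)
      atTop (𝓝 (Complex.exp (-((∑ p, t p ^ 2) / 180 : ℝ) / 2))) := by
  have hY := YY_continuous t
  set S : ℝ := (∑ p, t p ^ 2) / 180 with hS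
  have hS0 : 0 ≤ S := by positivity
  rcases eq_or_lt_of_le hS0 with h | h
  · have ht : ∀ p, t p = 0 := by
      have : ∑ p, t p ^ 2 = 0 := by linarith
      rw [Finset.sum_eq_zero_iff_of_nonneg (fun _ _ => sq_nonneg _)] at this
      intro p; simpa using this p (Finset.mem_univ _)
    have : YY (n := n) t = fun _ => 0 := by ext x; simp [YY, ht]
    rw [this, ← h]
    simp [charFun_apply]
  · have hs : 0 < √S := Real.sqrt_pos.2 h
    have key := tendsto_charFun_inv_sqrt_mul_pow (P := Measure.pi fun _ : Fin n => unif01)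
      (X := fun x => (√S)⁻¹ * YY t x) (Continuous.measurable (by fun_prop)).aemeasurable
      (by rw [integral_const_mul, int_YY, mul_zero])
      (by
        simp only [Pi.pow_apply, mul_pow]
        rw [integral_const_mul, int_YY_sq, inv_pow, Real.sq_sqrt hS0]
        exact inv_mul_cancel₀ h.ne') (√S)
    convert key using 2
    · rename_i d
      rw [charFun_map_mul_comp hY.measurable.aemeasurable]
      congr 2
      field_simp
    · norm_cast
      rw [Real.sq_sqrt hS0]

instance cubeLaw_prob (n d : ℕ) : IsProbabilityMeasure (cubeLaw n d) := by
  unfold cubeLaw; infer_instance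

/-- As `d → ∞`, the vector of normalised squared torus pair distances of `n` i.i.d.
uniform points in `[0,1]^d` converges weakly to a product of `n(n−1)/2` independent
centered Gaussians of variance `1/180`. -/
theorem stmt_12 (n : ℕ) (hn : 2 ≤ n) :
    ∀ f : BoundedContinuousFunction (Pairs n → ℝ) ℝ,
      Tendsto (fun d : ℕ => ∫ ω, f (torusTau n d ω) ∂(cubeLaw n d)) atTop
        (𝓝 (∫ v, f v ∂(Measure.pi fun _ : Pairs n => gaussianReal 0 (1/180 : NNReal)))) := by
  intro f
  have hm : ∀ d, Measurable (fun ω => WithLp.toLp 2 (torusTau n d ω)) := fun d =>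
    (by have := tau_continuous n d; fun_prop : Continuous _).measurable
  have hm' : Measurable (WithLp.toLp 2 : (Pairs n → ℝ) → EuclideanSpace ℝ (Pairs n)) := by fun_prop
  let μ : ℕ → ProbabilityMeasure (EuclideanSpace ℝ (Pairs n)) := fun d =>
    ⟨(cubeLaw n d).map (fun ω => WithLp.toLp 2 (torusTau n d ω)),
      Measure.isProbabilityMeasure_map (hm d).aemeasurable⟩
  let μ₀ : ProbabilityMeasure (EuclideanSpace ℝ (Pairs n)) :=
    ⟨(Measure.pi fun _ : Pairs n => gaussianReal 0 (1/180 : NNReal)).map (WithLp.toLp 2),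
      Measure.isProbabilityMeasure_map hm'.aemeasurable⟩
  have hconv : Tendsto μ atTop (𝓝 μ₀) := by
    refine ProbabilityMeasure.tendsto_of_tendsto_charFun fun t => ?_
    simp only [μ, μ₀, ProbabilityMeasure.coe_mk, charFun_tau, charFun_pi]
    convert charFun_tendsto n t using 2
    simp_rw [charFun_gaussianReal, ← Complex.exp_sum]
    congr 1
    push_cast
    rw [Finset.sum_div, neg_div, Finset.sum_div, ← Finset.sum_neg_distrib]
    refine Finset.sum_congr rfl fun p _ => ?_
    simp
    ring
  let g : BoundedContinuousFunction (EuclideanSpace ℝ (Pairs n)) ℝ :=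
    f.compContinuous ⟨WithLp.ofLp, by fun_prop⟩
  have hg := ProbabilityMeasure.tendsto_iff_forall_integral_tendsto.1 hconv g
  simp only [μ, μ₀, ProbabilityMeasure.coe_mk] at hg
  rw [integral_map hm'.aemeasurable g.continuous.aestronglyMeasurable] at hg
  simp_rw [fun d => integral_map (hm d).aemeasurable (μ := cubeLaw n d)
    g.continuous.aestronglyMeasurable] at hg
  exact hg
end
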